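/- arXiv:1309.2065 — 3 statements merged into one kernel-verified Lean document; each statement's English description precedes it below -/
import Mathlib

section
/- Let m be a positive even integer, let n₀ be an even integer with 0 ≤ n₀ ≤ m-2, let Θ ∈ GL_{n₀}(ℤ_2) ∩ S_{n₀}(ℤ_2)_e, let a ∈ ℤ_2 with a ≡ -1 mod 4, and let B₁ ∈ S_{m-n₀-2}(ℤ_2)^×. Then the map D ↦ 1_{n₀+1} ⊥ D induces a bijection from GL_{m-n₀-1}(ℤ_2)\Ω̃^{(1)}((a) ⊥ 4B₁) onto GL_m(ℤ_2)\Ω̃^{(0)}(Θ ⊥ [[2,1],[1,(1+a)/2]] ⊥ 2B₁); moreover, for every i ≥ 0, this bijection restricts to a bijection between the orbits contained in D_{m-n₀-1,i} and the orbits contained in D_{m,i}. -/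
/-!
An element `W` of `Ω̃^{(j)}(C)` corresponds to an integral matrix `A` of the appropriate type with
`A[W] = C`, so all the conditions can be stated over `ℤ_2` (`mem_OmT0_iff`, `mem_OmT1_iff`).

Let `T = Θ ⊥ [[2,1],[1,2x]] ⊥ 2B₁` with `a = -1 + 4x`, and `S = (a) ⊥ 4B₁`. Separating the first
`n₀ + 1` indices from the last `1 + k` ones, `T` is `[[Θ ⊥ 2, F], [Fᵀ, E]]`, where the only nonzero
row of `F` is `e = (1, 0, …, 0)`, and `S = 2E - eᵀe`. Hence `T[(1 ⊥ D)⁻¹]` has off-diagonal row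
`r = e D⁻¹` and lower block `E[D⁻¹]`, with `2 E[D⁻¹] = S[D⁻¹] + rᵀr`; it is even integral iff `r` is
integral and `S[D⁻¹] + rᵀr ∈ 4L`. When `D ∈ Ω̃^{(1)}(S)`, some integral `r₀` satisfies
`S[D⁻¹] + r₀ᵀr₀ ∈ 4L`; then `e D⁻¹` is automatically integral and congruent to `r₀` modulo `2`
(`exists_normalized_r`), so it can be used instead. Thus `D ∈ Ω̃^{(1)}(S)` iff
`1 ⊥ D ∈ Ω̃^{(0)}(T)` (`mem_OmT1_iff_fromBlocks_mem_OmT0`).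

Injectivity on orbits is a block computation (`sameLeft_fromBlocks_iff`). Surjectivity holds because
`Θ ⊥ [[2,1],[1,2x]]` is unimodular and therefore splits off every integral overlattice
(`exists_split`). Compatibility with the double cosets `D_{m,i}` follows from their description by
the integrality of `2 W⁻¹` and the valuation of `det W` (`mem_Dset_iff`), which comes from the Smith
normal form; both conditions are the same for `D` and `1 ⊥ D`.
-/

open Matrix Filter

open scoped Classical

noncomputable section

namespace KM

variable (p : ℕ) [Fact p.Prime]

/-- Entrywise coercion of a `ℤ_[p]`-matrix into `ℚ_[p]`. -/
def q {n m : Type*} (A : Matrix n m ℤ_[p]) : Matrix n m ℚ_[p] :=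
  A.map (fun x : ℤ_[p] => (x : ℚ_[p]))

/-- `ℤ_p`-equivalence of symmetric matrices with entries in `ℤ_p`. -/
def IntEquiv {n : Type*} [Fintype n] [DecidableEq n]
    (A B : Matrix n n ℤ_[p]) : Prop :=
  ∃ U : Matrix n n ℤ_[p], IsUnit U.det ∧ B = Uᵀ * A * U

/-- `ℤ_p`-equivalence of `ℤ_p`-matrices up to reindexing (for index types of
the same cardinality). -/
def IntEquivR {n n' : Type*} [Fintype n] [DecidableEq n] [Fintype n'] [DecidableEq n']
    (A : Matrix n n ℤ_[p]) (B : Matrix n' n' ℤ_[p]) : Prop :=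
  ∃ e : n ≃ n', IntEquiv p A (B.submatrix e e)

/-- `ℤ_p`-equivalence of symmetric matrices with entries in `ℚ_p`. -/
def RatEquiv {n : Type*} [Fintype n] [DecidableEq n]
    (A B : Matrix n n ℚ_[p]) : Prop :=
  ∃ U : Matrix n n ℤ_[p], IsUnit U.det ∧ B = (q p U)ᵀ * A * (q p U)

/-- `ℤ_p`-equivalence of `ℚ_p`-matrices up to reindexing. -/
def RatEquivR {n n' : Type*} [Fintype n] [DecidableEq n] [Fintype n'] [DecidableEq n']
    (A : Matrix n n ℚ_[p]) (B : Matrix n' n' ℚ_[p]) : Prop :=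
  ∃ e : n ≃ n', RatEquiv p A (B.submatrix e e)

/-- A matrix over `ℚ_p` is half-integral: symmetric, diagonal entries in `ℤ_p`,
off-diagonal entries in `(1/2)ℤ_p`. -/
def IsHalfIntegral {n : Type*} [DecidableEq n] (A : Matrix n n ℚ_[p]) : Prop :=
  A.IsSymm ∧ ∀ i j, ∃ x : ℤ_[p], A i j = (if i = j then 1 else 2⁻¹) * (x : ℚ_[p])

/-- `A ∈ 4·L_{m,p}`. -/
def InFourL {n : Type*} [DecidableEq n] (A : Matrix n n ℚ_[p]) : Prop :=
  IsHalfIntegral p ((4 : ℚ_[p])⁻¹ • A)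

/-- The rank-one matrix `rᵀ r` viewed over `ℚ_p`. -/
def outer {n : Type*} (r : n → ℤ_[p]) : Matrix n n ℚ_[p] :=
  Matrix.of fun i j => ((r i : ℚ_[p]) * (r j : ℚ_[p]))

/-- The matrix `A^{(1)} = [[1, r/2], [rᵀ/2, (A + rᵀr)/4]]`. -/
def Aone {n : Type*} [Fintype n] [DecidableEq n]
    (A : Matrix n n ℚ_[p]) (r : n → ℤ_[p]) :
    Matrix (Fin 1 ⊕ n) (Fin 1 ⊕ n) ℚ_[p] :=
  Matrix.fromBlocks 1 (Matrix.of fun _ j => (r j : ℚ_[p]) / 2)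
    (Matrix.of fun i _ => (r i : ℚ_[p]) / 2)
    ((4 : ℚ_[p])⁻¹ • (A + outer p r))

/-- A `ℚ_p`-matrix has all entries in `ℤ_p`. -/
def IsIntegral {n m : Type*} (A : Matrix n m ℚ_[p]) : Prop :=
  ∀ i j, ∃ x : ℤ_[p], A i j = (x : ℚ_[p])

/-- Membership in `L^{(0)}`: nondegenerate, symmetric, integral, even diagonal. -/
def InL0 {n : Type*} [Fintype n] [DecidableEq n] (A : Matrix n n ℚ_[p]) : Prop :=
  A.IsSymm ∧ A.det ≠ 0 ∧ ∀ i j, ∃ x : ℤ_[p], A i j = (if i = j then 2 else 1) * (x : ℚ_[p])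

/-- Membership in `L'_{m,p}`. -/
def InLprime {n : Type*} [Fintype n] [DecidableEq n] (A : Matrix n n ℚ_[p]) : Prop :=
  IsHalfIntegral p A ∧ ∃ r : n → ℤ_[p], InFourL p (A + outer p r)

/-- Membership in `L^{(1)}`: nondegenerate element of `L'`. -/
def InL1 {n : Type*} [Fintype n] [DecidableEq n] (A : Matrix n n ℚ_[p]) : Prop :=
  InLprime p A ∧ A.det ≠ 0

/-- `B[W⁻¹] = (W⁻¹)ᵀ B W⁻¹`. -/
def conjInv {n : Type*} [Fintype n] [DecidableEq n]
    (B : Matrix n n ℚ_[p]) (W : Matrix n n ℤ_[p]) : Matrix n n ℚ_[p] :=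
  ((q p W)⁻¹)ᵀ * B * (q p W)⁻¹

/-- `Ω̃(C)` for `C` an integral symmetric matrix. -/
def OmS {n : Type*} [Fintype n] [DecidableEq n] (C : Matrix n n ℤ_[p]) :
    Set (Matrix n n ℤ_[p]) :=
  {W | W.det ≠ 0 ∧ (conjInv p (q p C) W).IsSymm ∧ IsIntegral p (conjInv p (q p C) W)}

/-- `Ω̃^{(0)}(B)`. -/
def OmT0 {n : Type*} [Fintype n] [DecidableEq n] (B : Matrix n n ℚ_[p]) :
    Set (Matrix n n ℤ_[p]) :=
  {W | W.det ≠ 0 ∧ InL0 p (conjInv p B W)}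

/-- `Ω̃^{(1)}(B)`. -/
def OmT1 {n : Type*} [Fintype n] [DecidableEq n] (B : Matrix n n ℚ_[p]) :
    Set (Matrix n n ℤ_[p]) :=
  {W | W.det ≠ 0 ∧ InL1 p (conjInv p B W)}

/-- `Ω̃^{(j)}(B)` for `j ∈ {0,1}`. -/
def OmTJ {n : Type*} [Fintype n] [DecidableEq n] (j : ℕ) (B : Matrix n n ℚ_[p]) :
    Set (Matrix n n ℤ_[p]) :=
  {W | W.det ≠ 0 ∧ if j = 0 then InL0 p (conjInv p B W) else InL1 p (conjInv p B W)}

/-- The double coset `D_{m,i} = GL·diag(1_{m-i}, p·1_i)·GL`. -/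
def Dset {n : Type*} [Fintype n] [DecidableEq n] (i : ℕ) : Set (Matrix n n ℤ_[p]) :=
  {W | ∃ s : Finset n, s.card = i ∧
    ∃ U V : Matrix n n ℤ_[p], IsUnit U.det ∧ IsUnit V.det ∧
      W = U * Matrix.diagonal (fun j => if j ∈ s then (p : ℤ_[p]) else 1) * V}

/-- `W` and `W'` lie in the same left `GL_m(ℤ_p)`-coset. -/
def SameLeft {n : Type*} [Fintype n] [DecidableEq n] (W W' : Matrix n n ℤ_[p]) : Prop :=
  ∃ U : Matrix n n ℤ_[p], IsUnit U.det ∧ W' = U * W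

/-- `W` and `W'` lie in the same right `GL_m(ℤ_p)`-coset. -/
def SameRight {n : Type*} [Fintype n] [DecidableEq n] (W W' : Matrix n n ℤ_[p]) : Prop :=
  ∃ U : Matrix n n ℤ_[p], IsUnit U.det ∧ W' = W * U

/-- `φ` induces a bijection between the sets of left `GL(ℤ_p)`-cosets of `Ω` and `Ω'`. -/
def InducesLeftBij {n n' : Type*} [Fintype n] [DecidableEq n] [Fintype n'] [DecidableEq n']
    (φ : Matrix n n ℤ_[p] → Matrix n' n' ℤ_[p])
    (Ω : Set (Matrix n n ℤ_[p])) (Ω' : Set (Matrix n' n' ℤ_[p])) : Prop :=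
  (∀ W ∈ Ω, φ W ∈ Ω') ∧
  (∀ W₁ ∈ Ω, ∀ W₂ ∈ Ω, (SameLeft p W₁ W₂ ↔ SameLeft p (φ W₁) (φ W₂))) ∧
  (∀ V ∈ Ω', ∃ W ∈ Ω, SameLeft p (φ W) V)

/-- `A[Y] ≡ B mod p^a S_e`. -/
def densCond {n n' : Type*} [Fintype n] [Fintype n'] [DecidableEq n']
    (A : Matrix n n ℤ_[p]) (B : Matrix n' n' ℤ_[p]) (a : ℕ)
    (Y : Matrix n n' ℤ_[p]) : Prop :=
  ∀ i j, ((p : ℤ_[p]) ^ a * (if i = j then 2 else 1)) ∣ (Yᵀ * A * Y - B) i j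

/-- `#A_a(A,B)`: the number of solutions mod `p^a`. -/
def Acount {n n' : Type*} [Fintype n] [Fintype n'] [DecidableEq n']
    (A : Matrix n n ℤ_[p]) (B : Matrix n' n' ℤ_[p]) (a : ℕ) : ℕ :=
  Nat.card {X : Matrix n n' (ZMod (p ^ a)) //
    ∃ Y : Matrix n n' ℤ_[p], Y.map (PadicInt.toZModPow a) = X ∧ densCond p A B a Y}

/-- The local density `α_p(A,B)`. -/
def locDensPair {n n' : Type*} [Fintype n] [Fintype n'] [DecidableEq n']
    (A : Matrix n n ℤ_[p]) (B : Matrix n' n' ℤ_[p]) : ℝ :=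
  limUnder atTop (fun a : ℕ =>
    (2 : ℝ) ^ (-(if Fintype.card n = Fintype.card n' then (1 : ℤ) else 0)) *
    (p : ℝ) ^ ((a : ℤ) * (-((Fintype.card n : ℤ) * (Fintype.card n' : ℤ)) +
      ((Fintype.card n' : ℤ) * ((Fintype.card n' : ℤ) + 1)) / 2)) *
    (Acount p A B a : ℝ))

/-- The local density `α_p(A) = α_p(A,A)`. -/
def locDens {n : Type*} [Fintype n] [DecidableEq n] (A : Matrix n n ℤ_[p]) : ℝ :=
  locDensPair p A A

/-- `χ_p` on units, for `p` odd. -/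
def chiOdd (u : ℤ_[p]) : ℤ :=
  if IsSquare (u : ℚ_[p]) then 1 else if IsUnit u then -1 else 0

/-- `χ_2` on units. -/
def chi2 (u : ℤ_[2]) : ℤ :=
  if IsSquare (u : ℚ_[2]) then 1
  else if IsSquare (((5 * u : ℤ_[2]) : ℚ_[2])) then -1 else 0

/-- The set of `GL(ℤ_p)`-equivalence classes of elements of `S`. -/
def classesOf {n : Type*} [Fintype n] [DecidableEq n]
    (S : Set (Matrix n n ℤ_[p])) : Set (Set (Matrix n n ℤ_[p])) :=
  (fun A => {A' | IntEquiv p A A'}) '' S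

end KM
/-- The index identification realizing `D ↦ 1_{n₀+1} ⊥ D` as a map into matrices
indexed by `Fin n₀ ⊕ (Fin 2 ⊕ Fin k)`. -/
def e8 (n₀ k : ℕ) : ((Fin n₀ ⊕ Fin 1) ⊕ (Fin 1 ⊕ Fin k)) ≃ (Fin n₀ ⊕ (Fin 2 ⊕ Fin k)) :=
  (Equiv.sumAssoc (Fin n₀) (Fin 1) (Fin 1 ⊕ Fin k)).trans
    ((Equiv.sumCongr (Equiv.refl (Fin n₀)) ((Equiv.sumAssoc (Fin 1) (Fin 1) (Fin k)).symm)).trans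
      (Equiv.sumCongr (Equiv.refl (Fin n₀))
        (Equiv.sumCongr (finSumFinEquiv : Fin 1 ⊕ Fin 1 ≃ Fin 2) (Equiv.refl (Fin k)))))

namespace KMaux

/-! ### The double cosets `D_{n,i}` -/

theorem diag_case (c : ℤ_[2]) (hc : c ∣ 2) :
    ∃ u : ℤ_[2], IsUnit u ∧ (c = u ∨ c = 2 * u) := by
  by_cases h : IsUnit c
  · exact ⟨c, h, Or.inl rfl⟩
  · obtain ⟨d, hd⟩ := hc
    have h2 : Irreducible (2 : ℤ_[2]) := by
      simpa using (PadicInt.prime_p (p := 2)).irreducible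
    have hdu := (h2.isUnit_or_isUnit hd).resolve_left h
    obtain ⟨u, rfl⟩ := hdu
    refine ⟨((u⁻¹ : ℤ_[2]ˣ) : ℤ_[2]), Units.isUnit _, Or.inr ?_⟩
    rw [hd, mul_assoc, Units.mul_inv, mul_one]

/-- Smith normal form of a nonsingular square matrix, in the form `W V = U diag(c)`. It is the
Smith normal form of the column lattice of `W` inside `ℤ_2^n`: `U` holds the adapted basis of
`ℤ_2^n`, and `V` the coordinates of the adapted basis of the column lattice. -/
theorem smith {n : Type*} [Fintype n] [DecidableEq n] (W : Matrix n n ℤ_[2]) (hW : W.det ≠ 0) :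
    ∃ U V : Matrix n n ℤ_[2], IsUnit U.det ∧ IsUnit V.det ∧
      ∃ c : n → ℤ_[2], W * V = U * Matrix.diagonal c := by
  have hinj : Function.Injective (Matrix.toLin' W) := by
    exact Matrix.mulVec_injective_of_det_ne_zero hW
  let e := LinearEquiv.ofInjective (Matrix.toLin' W) hinj
  obtain ⟨b, c, bN, hb⟩ := Submodule.exists_smith_normal_form_of_rank_eq
    (N := LinearMap.range (Matrix.toLin' W)) (Pi.basisFun ℤ_[2] n) (e.finrank_eq.symm)
  let bV : Module.Basis n ℤ_[2] (n → ℤ_[2]) := bN.map e.symm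
  have hu : ∀ b' : Module.Basis n ℤ_[2] (n → ℤ_[2]),
      IsUnit ((Pi.basisFun ℤ_[2] n).toMatrix b').det := by
    intro b'
    rw [← Module.Basis.det_apply]
    exact (Pi.basisFun ℤ_[2] n).isUnit_det b'
  refine ⟨(Pi.basisFun ℤ_[2] n).toMatrix b, (Pi.basisFun ℤ_[2] n).toMatrix bV,
    hu b, hu bV, c, ?_⟩
  have hk : ∀ j, W *ᵥ (bV j) = c j • b j := by
    intro j
    rw [← hb j]
    have : e (bV j) = bN j := by simp [bV]
    rw [← this]
    rfl
  ext i j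
  have := congrFun (hk j) i
  rw [Matrix.mul_diagonal]
  simp only [Module.Basis.toMatrix_apply, Pi.basisFun_repr, Matrix.mul_apply]
  simpa [Matrix.mulVec, dotProduct, mul_comm] using this

theorem two_pow_assoc {i j : ℕ} {u v : ℤ_[2]} (hu : IsUnit u) (hv : IsUnit v)
    (h : u * 2 ^ i = v * 2 ^ j) : i = j := by
  have h1 : ‖u * 2 ^ i‖ = ‖v * 2 ^ j‖ := by rw [h]
  rw [norm_mul, norm_mul, PadicInt.isUnit_iff.1 hu, PadicInt.isUnit_iff.1 hv, one_mul, one_mul,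
    norm_pow, norm_pow] at h1
  have h2 : ‖(2 : ℤ_[2])‖ = 2⁻¹ := by simpa using PadicInt.norm_p (p := 2)
  rw [h2, inv_pow, inv_pow, _root_.inv_inj] at h1
  exact (pow_right_injective₀ (by norm_num : (0 : ℝ) < 2) (by norm_num)) h1

theorem det_diag {n : Type*} [Fintype n] [DecidableEq n] (s : Finset n) :
    (Matrix.diagonal (fun j => if j ∈ s then ((2 : ℕ) : ℤ_[2]) else 1)).det = 2 ^ s.card := by
  rw [Matrix.det_diagonal, Finset.prod_ite_mem, Finset.univ_inter, Finset.prod_const]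
  simp

/-- Intrinsic description of the double coset `D_{n,i}`: the elementary divisors of `W` are `1` or
`2` iff `2 W⁻¹` is integral, and `i` is then the `2`-adic valuation of `det W`. -/
theorem mem_Dset_iff {n : Type*} [Fintype n] [DecidableEq n] (i : ℕ) (W : Matrix n n ℤ_[2]) :
    W ∈ KM.Dset 2 i ↔
      (∃ u : ℤ_[2], IsUnit u ∧ W.det = u * 2 ^ i) ∧ ∃ X : Matrix n n ℤ_[2], W * X = 2 := by
  constructor
  · rintro ⟨s, hs, U, V, hU, hV, rfl⟩
    refine ⟨⟨U.det * V.det, hU.mul hV, ?_⟩,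
      V⁻¹ * Matrix.diagonal (fun j => if j ∈ s then 1 else 2) * U⁻¹, ?_⟩
    · rw [Matrix.det_mul, Matrix.det_mul, det_diag, hs]; ring
    · have h1 : Matrix.diagonal (fun j => if j ∈ s then ((2 : ℕ) : ℤ_[2]) else 1) *
          Matrix.diagonal (fun j => if j ∈ s then 1 else 2) = 2 := by
        rw [Matrix.diagonal_mul_diagonal]
        ext a b
        by_cases h' : a = b
        · subst h'
          by_cases h : a ∈ s <;> simp [h, Matrix.ofNat_apply]
        · simp [h', Matrix.ofNat_apply]
      calc _ = U * Matrix.diagonal (fun j => if j ∈ s then ((2 : ℕ) : ℤ_[2]) else 1) * (V * V⁻¹) *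
            Matrix.diagonal (fun j => if j ∈ s then 1 else 2) * U⁻¹ := by simp only [mul_assoc]
        _ = U * (Matrix.diagonal (fun j => if j ∈ s then ((2 : ℕ) : ℤ_[2]) else 1) *
            Matrix.diagonal (fun j => if j ∈ s then 1 else 2)) * U⁻¹ := by
          rw [Matrix.mul_nonsing_inv _ hV]; simp only [mul_assoc, one_mul]
        _ = 2 := by
          rw [h1, mul_assoc, (Commute.ofNat_left 2 U⁻¹).eq, ← mul_assoc,
            Matrix.mul_nonsing_inv _ hU, one_mul]
  · rintro ⟨⟨u, hu, hdet⟩, X, hX⟩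
    have hW : W.det ≠ 0 := by
      rw [hdet]; exact mul_ne_zero hu.ne_zero (pow_ne_zero _ two_ne_zero)
    obtain ⟨U, V, hU, hV, c, hc⟩ := smith W hW
    have h2 : Matrix.diagonal c * (V⁻¹ * X * U) = 2 := by
      have : U * (Matrix.diagonal c * (V⁻¹ * X * U)) = U * 2 := by
        calc _ = (U * Matrix.diagonal c) * (V⁻¹ * X * U) := by simp only [mul_assoc]
          _ = W * (V * V⁻¹) * X * U := by rw [← hc]; simp only [mul_assoc]
          _ = U * 2 := by
            rw [Matrix.mul_nonsing_inv _ hV, mul_one, hX, (Commute.ofNat_left 2 U).eq]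
      have h3 := congrArg (fun Z => U⁻¹ * Z) this
      simpa only [← mul_assoc, Matrix.nonsing_inv_mul _ hU, one_mul] using h3
    have hc2 : ∀ j, c j ∣ 2 := by
      intro j
      have := congrFun (congrFun h2 j) j
      rw [Matrix.diagonal_mul] at this
      exact ⟨_, by rw [this]; simp [Matrix.ofNat_apply]⟩
    choose v hv hcv using fun j => diag_case (c j) (hc2 j)
    let s : Finset n := Finset.univ.filter (fun j => c j = 2 * v j)
    have hcs : Matrix.diagonal c =
        Matrix.diagonal (fun j => if j ∈ s then ((2 : ℕ) : ℤ_[2]) else 1) * Matrix.diagonal v := by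
      rw [Matrix.diagonal_mul_diagonal]
      congr 1
      funext j
      by_cases h : c j = 2 * v j
      · simp [s, h]
      · simp [s, (hcv j).resolve_right h, (hv j).ne_zero]
    have hvd : IsUnit (Matrix.diagonal v).det := by
      rw [Matrix.det_diagonal]
      exact IsUnit.prod_univ_iff.2 hv
    have hWe : W = U * Matrix.diagonal (fun j => if j ∈ s then ((2 : ℕ) : ℤ_[2]) else 1) *
        (Matrix.diagonal v * V⁻¹) := by
      calc W = W * V * V⁻¹ := by rw [mul_assoc, Matrix.mul_nonsing_inv _ hV, mul_one]
        _ = _ := by rw [hc, hcs]; simp only [mul_assoc]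
    have hV' : IsUnit (Matrix.diagonal v * V⁻¹).det := by
      rw [Matrix.det_mul]
      exact hvd.mul (Matrix.isUnit_nonsing_inv_det _ hV)
    refine ⟨s, ?_, U, _, hU, hV', hWe⟩
    refine two_pow_assoc (hU.mul hV') hu ?_
    conv_rhs => rw [← hdet, hWe, Matrix.det_mul, Matrix.det_mul, det_diag]
    ring

theorem fromBlocks_mem_Dset_iff {α β : Type*} [Fintype α] [DecidableEq α] [Fintype β]
    [DecidableEq β] (i : ℕ) (W : Matrix β β ℤ_[2]) :
    Matrix.fromBlocks (1 : Matrix α α ℤ_[2]) 0 0 W ∈ KM.Dset 2 i ↔ W ∈ KM.Dset 2 i := by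
  rw [mem_Dset_iff, mem_Dset_iff, Matrix.det_fromBlocks_zero₂₁, Matrix.det_one, one_mul]
  refine and_congr_right fun _ => ⟨?_, ?_⟩
  · rintro ⟨X, hX⟩
    rw [← Matrix.fromBlocks_toBlocks X, Matrix.fromBlocks_multiply] at hX
    refine ⟨X.toBlocks₂₂, ?_⟩
    ext a b
    have := congrFun (congrFun hX (Sum.inr a)) (Sum.inr b)
    simpa [Matrix.ofNat_apply] using this
  · rintro ⟨X, hX⟩
    refine ⟨Matrix.fromBlocks 2 0 0 X, ?_⟩
    rw [Matrix.fromBlocks_multiply]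
    simp only [one_mul, hX, Matrix.mul_zero, Matrix.zero_mul, add_zero, zero_add]
    ext a b
    rcases a with a | a <;> rcases b with b | b <;> simp [Matrix.ofNat_apply]

theorem submatrix_mem_Dset_iff {n n' : Type*} [Fintype n] [DecidableEq n] [Fintype n']
    [DecidableEq n'] (e : n' ≃ n) (i : ℕ) (W : Matrix n n ℤ_[2]) :
    W.submatrix e e ∈ KM.Dset 2 i ↔ W ∈ KM.Dset 2 i := by
  rw [mem_Dset_iff, mem_Dset_iff, Matrix.det_submatrix_equiv_self]
  refine and_congr_right fun _ => ⟨?_, ?_⟩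
  · rintro ⟨X, hX⟩
    refine ⟨X.submatrix e.symm e.symm, ?_⟩
    have := congrArg (fun Z => Z.submatrix e.symm e.symm) hX
    simp only [← Matrix.submatrix_mul_equiv _ _ _ e.symm _] at this
    simp only [Matrix.submatrix_submatrix, Equiv.self_comp_symm, Matrix.submatrix_id_id] at this
    rw [this]
    ext a b
    simp [Matrix.ofNat_apply]
  · rintro ⟨X, hX⟩
    refine ⟨X.submatrix e e, ?_⟩
    rw [Matrix.submatrix_mul_equiv, hX]
    ext a b
    simp [Matrix.ofNat_apply]

/-! ### Integral descriptions of `Ω̃^{(0)}` and `Ω̃^{(1)}` -/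

theorem q_eq {n m : Type*} (A : Matrix n m ℤ_[2]) :
    KM.q 2 A = A.map (PadicInt.Coe.ringHom (p := 2)) := rfl

theorem q_injective {n m : Type*} {A B : Matrix n m ℤ_[2]} (h : KM.q 2 A = KM.q 2 B) : A = B := by
  ext i j
  have := congrFun (congrFun h i) j
  exact Subtype.ext this

theorem coe_two : ((2 : ℤ_[2]) : ℚ_[2]) = 2 := rfl

theorem coe_four : ((4 : ℤ_[2]) : ℚ_[2]) = 4 := rfl

theorem q_mul {n m l : Type*} [Fintype m] (A : Matrix n m ℤ_[2]) (B : Matrix m l ℤ_[2]) :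
    KM.q 2 (A * B) = KM.q 2 A * KM.q 2 B := by
  simp only [q_eq, Matrix.map_mul]

theorem q_transpose {n m : Type*} (A : Matrix n m ℤ_[2]) : KM.q 2 Aᵀ = (KM.q 2 A)ᵀ := rfl

theorem q_det {n : Type*} [Fintype n] [DecidableEq n] (A : Matrix n n ℤ_[2]) :
    (KM.q 2 A).det = ((A.det : ℤ_[2]) : ℚ_[2]) := by
  rw [q_eq]
  exact (RingHom.map_det (PadicInt.Coe.ringHom (p := 2)) A).symm

theorem q_det_unit {n : Type*} [Fintype n] [DecidableEq n] {A : Matrix n n ℤ_[2]}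
    (h : A.det ≠ 0) : IsUnit (KM.q 2 A).det := by
  rw [q_det, isUnit_iff_ne_zero]
  simpa using h

theorem conjInv_eq_q_iff {n : Type*} [Fintype n] [DecidableEq n] {W : Matrix n n ℤ_[2]}
    (hW : W.det ≠ 0) (C A : Matrix n n ℤ_[2]) :
    KM.conjInv 2 (KM.q 2 C) W = KM.q 2 A ↔ Wᵀ * A * W = C := by
  have hu := q_det_unit hW
  have hut : IsUnit ((KM.q 2 W)ᵀ).det := by rwa [Matrix.det_transpose]
  unfold KM.conjInv
  constructor
  · intro h
    apply q_injective
    rw [q_mul, q_mul, q_transpose, ← h, Matrix.transpose_nonsing_inv]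
    rw [mul_assoc, mul_assoc, mul_assoc, Matrix.nonsing_inv_mul _ hu, mul_one, ← mul_assoc,
      Matrix.mul_nonsing_inv _ hut, one_mul]
  · rintro rfl
    rw [q_mul, q_mul, q_transpose, Matrix.transpose_nonsing_inv]
    rw [mul_assoc, mul_assoc, mul_assoc, Matrix.mul_nonsing_inv _ hu, mul_one, ← mul_assoc,
      Matrix.nonsing_inv_mul _ hut, one_mul]

theorem det_conjInv_ne {n : Type*} [Fintype n] [DecidableEq n] {W : Matrix n n ℤ_[2]}
    (hW : W.det ≠ 0) {C : Matrix n n ℤ_[2]} (hC : C.det ≠ 0) :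
    (KM.conjInv 2 (KM.q 2 C) W).det ≠ 0 := by
  unfold KM.conjInv
  have h1 := (Matrix.isUnit_nonsing_inv_det _ (q_det_unit hW)).ne_zero
  rw [Matrix.det_mul, Matrix.det_mul, Matrix.det_transpose]
  exact mul_ne_zero (mul_ne_zero h1 (q_det_unit hC).ne_zero) h1

/-- Description of `Ω̃^{(0)}(C)` without inverses: `W` lies in it iff `C = A[W]` for an integral even
symmetric matrix `A`. -/
theorem mem_OmT0_iff {n : Type*} [Fintype n] [DecidableEq n] {C : Matrix n n ℤ_[2]}
    (hC : C.det ≠ 0) (W : Matrix n n ℤ_[2]) :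
    W ∈ KM.OmT0 2 (KM.q 2 C) ↔ W.det ≠ 0 ∧ ∃ A : Matrix n n ℤ_[2],
      A.IsSymm ∧ (∀ i, 2 ∣ A i i) ∧ Wᵀ * A * W = C := by
  refine and_congr_right fun hW => ⟨?_, ?_⟩
  · rintro ⟨hs, -, hx⟩
    choose x hx using hx
    have hA : KM.conjInv 2 (KM.q 2 C) W =
        KM.q 2 (Matrix.of fun i j => (if i = j then 2 else 1) * x i j) := by
      ext i j
      rw [hx]
      simp only [KM.q, Matrix.map_apply, Matrix.of_apply]
      split_ifs <;> simp [coe_two]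
    refine ⟨_, ?_, ?_, (conjInv_eq_q_iff hW _ _).1 hA⟩
    · rw [hA] at hs
      exact q_injective hs
    · intro i
      simp
  · rintro ⟨A, hs, he, hA⟩
    refine ⟨?_, det_conjInv_ne hW hC, ?_⟩
    · rw [(conjInv_eq_q_iff hW _ _).2 hA]
      exact congrArg (KM.q 2) hs
    · rw [(conjInv_eq_q_iff hW _ _).2 hA]
      intro i j
      by_cases h : i = j
      · subst h
        obtain ⟨x, hx⟩ := he i
        exact ⟨x, by simp [KM.q, hx, coe_two]⟩
      · exact ⟨A i j, by simp [KM.q, h]⟩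

/-- Description of `Ω̃^{(1)}(C)` without inverses: `W` lies in it iff `C = A[W]` for an integral
symmetric `A` such that `A + rᵀr` has entries in `2ℤ_2` and diagonal entries in `4ℤ_2`, for some
integral row vector `r`. -/
theorem mem_OmT1_iff {n : Type*} [Fintype n] [DecidableEq n] {C : Matrix n n ℤ_[2]}
    (hC : C.det ≠ 0) (W : Matrix n n ℤ_[2]) :
    W ∈ KM.OmT1 2 (KM.q 2 C) ↔ W.det ≠ 0 ∧ ∃ A : Matrix n n ℤ_[2], A.IsSymm ∧
      (∃ r : n → ℤ_[2], (∀ i j, 2 ∣ A i j + r i * r j) ∧ (∀ i, 4 ∣ A i i + r i * r i)) ∧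
      Wᵀ * A * W = C := by
  refine and_congr_right fun hW => ⟨?_, ?_⟩
  · rintro ⟨⟨⟨hs, -⟩, r, -, hx⟩, -⟩
    choose x hx using hx
    have hA : KM.conjInv 2 (KM.q 2 C) W =
        KM.q 2 (Matrix.of fun i j => (if i = j then 4 else 2) * x i j - r i * r j) := by
      ext i j
      have := hx i j
      simp only [Matrix.smul_apply, Matrix.add_apply, KM.outer, Matrix.of_apply,
        smul_eq_mul] at this
      simp only [KM.q, Matrix.map_apply, Matrix.of_apply]
      split_ifs at this ⊢
      · push_cast [coe_two, coe_four]
        linear_combination (norm := (simp only [KM.q]; ring)) 4 * this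
      · push_cast [coe_two, coe_four]
        linear_combination (norm := (simp only [KM.q]; ring)) 4 * this
    refine ⟨_, ?_, ⟨r, ?_, ?_⟩, (conjInv_eq_q_iff hW _ _).1 hA⟩
    · rw [hA] at hs
      exact q_injective hs
    · intro i j
      simp only [Matrix.of_apply, sub_add_cancel]
      split_ifs
      · exact ⟨2 * x i j, by ring⟩
      · exact ⟨x i j, rfl⟩
    · intro i
      simp
  · rintro ⟨A, hs, ⟨r, h2, h4⟩, hA⟩
    have hsq : (KM.q 2 A).IsSymm := congrArg (KM.q 2) hs
    refine ⟨⟨⟨?_, ?_⟩, r, ⟨?_, ?_⟩⟩, det_conjInv_ne hW hC⟩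
    all_goals rw [(conjInv_eq_q_iff hW _ _).2 hA]
    · exact hsq
    · intro i j
      by_cases h : i = j
      · exact ⟨A i j, by simp [KM.q, h]⟩
      · exact ⟨2 * A i j, by simp [KM.q, h, coe_two]⟩
    · ext i j
      simp [KM.outer, hsq.apply i j, mul_comm (r j : ℚ_[2]), mul_add]
    · intro i j
      by_cases h : i = j
      · subst h
        obtain ⟨x, hx⟩ := h4 i
        refine ⟨x, ?_⟩
        have := congrArg (fun z : ℤ_[2] => (z : ℚ_[2])) hx
        push_cast [coe_two, coe_four] at this
        simp [KM.q, KM.outer, this]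
      · obtain ⟨x, hx⟩ := h2 i j
        refine ⟨x, ?_⟩
        have := congrArg (fun z : ℤ_[2] => (z : ℚ_[2])) hx
        push_cast [coe_two, coe_four] at this
        simp [KM.q, KM.outer, this, h]
        ring

theorem submatrix_congruence {n n' : Type*} [Fintype n] [DecidableEq n] [Fintype n'] [DecidableEq n']
    (e : n' ≃ n) (A W C : Matrix n n ℤ_[2]) (h : Wᵀ * A * W = C) :
    (W.submatrix e e)ᵀ * A.submatrix e e * W.submatrix e e = C.submatrix e e := by
  rw [← h, Matrix.transpose_submatrix, Matrix.submatrix_mul_equiv, Matrix.submatrix_mul_equiv]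

theorem submatrix_mem_OmT0 {n n' : Type*} [Fintype n] [DecidableEq n] [Fintype n']
    [DecidableEq n'] (e : n' ≃ n) {C : Matrix n n ℤ_[2]} (hC : C.det ≠ 0) {W : Matrix n n ℤ_[2]}
    (h : W ∈ KM.OmT0 2 (KM.q 2 C)) :
    W.submatrix e e ∈ KM.OmT0 2 (KM.q 2 (C.submatrix e e)) := by
  rw [mem_OmT0_iff hC] at h
  rw [mem_OmT0_iff (by rwa [Matrix.det_submatrix_equiv_self])]
  obtain ⟨hW, A, hs, he, hA⟩ := h
  refine ⟨by rwa [Matrix.det_submatrix_equiv_self], A.submatrix e e, hs.submatrix e,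
    fun i => he (e i), submatrix_congruence e _ _ _ hA⟩

/-- The value of an even symmetric form at any integral vector is even: modulo `2` the
off-diagonal terms cancel in pairs. -/
theorem even_form {n : Type*} [Fintype n] {A : Matrix n n ℤ_[2]}
    (hs : A.IsSymm) (he : ∀ i, 2 ∣ A i i) (u : n → ℤ_[2]) :
    (2 : ℤ_[2]) ∣ ∑ j, (∑ i, u i * A i j) * u j := by
  simp_rw [Finset.sum_mul]
  rw [← Finset.sum_product', ← Ideal.mem_span_singleton, ← Ideal.Quotient.eq_zero_iff_mem, map_sum]
  have h2 : ∀ x : ℤ_[2], 2 ∣ x → Ideal.Quotient.mk (Ideal.span {(2 : ℤ_[2])}) x = 0 := fun x hx =>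
    Ideal.Quotient.eq_zero_iff_mem.2 (Ideal.mem_span_singleton.2 hx)
  refine Finset.sum_involution (fun x _ => x.swap) ?_ ?_ (fun _ _ => Finset.mem_univ _)
    (fun x _ => x.swap_swap)
  · rintro ⟨i, j⟩ -
    rw [← map_add]
    apply h2
    refine ⟨u i * A i j * u j, ?_⟩
    simp only [Prod.swap]
    rw [hs.apply i j]
    ring
  · rintro ⟨i, j⟩ - h hij
    obtain rfl : j = i := congrArg Prod.fst hij
    exact h (h2 _ (((he j).mul_left _).mul_right _))

/-- `Ω̃^{(0)}(C)` is a union of left `GL`-orbits. -/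
theorem SameLeft.mem_OmT0 {n : Type*} [Fintype n] [DecidableEq n] {C : Matrix n n ℤ_[2]}
    (hC : C.det ≠ 0) {V W : Matrix n n ℤ_[2]} (h : V ∈ KM.OmT0 2 (KM.q 2 C))
    (hs : KM.SameLeft 2 W V) : W ∈ KM.OmT0 2 (KM.q 2 C) := by
  rw [mem_OmT0_iff hC] at h ⊢
  obtain ⟨U, hU, rfl⟩ := hs
  obtain ⟨hW, A, hs, he, hA⟩ := h
  rw [Matrix.det_mul] at hW
  refine ⟨right_ne_zero_of_mul hW, Uᵀ * A * U, ?_, ?_, ?_⟩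
  · unfold Matrix.IsSymm
    rw [Matrix.transpose_mul, Matrix.transpose_mul, Matrix.transpose_transpose, hs, mul_assoc]
  · intro i
    simp only [Matrix.mul_apply, Matrix.transpose_apply]
    exact even_form hs he fun l => U l i
  · rw [← hA, Matrix.transpose_mul]
    simp only [mul_assoc]

/-! ### Comparison of `Ω̃^{(1)}` and `Ω̃^{(0)}` -/

theorem two_dvd_or (x : ℤ_[2]) : 2 ∣ x ∨ 2 ∣ x - 1 := by
  obtain ⟨n, hn, hx⟩ := PadicInt.exists_mem_range (p := 2) (x := x)
  rw [PadicInt.maximalIdeal_eq_span_p, Ideal.mem_span_singleton] at hx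
  interval_cases n
  · left; simpa using hx
  · right; simpa using hx

theorem two_not_dvd_unit {x : ℤ_[2]} (h : IsUnit x) : ¬ 2 ∣ x := fun h2 =>
  (PadicInt.prime_p (p := 2)).not_isUnit (isUnit_of_dvd_unit (by simpa using h2) h)

/-- If `A + r₀ᵀr₀ ∈ 4L` and the row of index `b` of `A[D]` is `a` times the unit row vector `e_b`,
with `a` a unit, then `r₀` can be replaced by the integral vector `r` with `r D = e_b`.
Writing `d` for the column of `D` of index `b`, this `r` is `a⁻¹ dᵀ A`, and modulo `2` it is
`(dᵀr₀ᵀ) r₀`, where the scalar `s = dᵀr₀ᵀ` is odd because `a ≡ s²` modulo `2`. So `r ≡ r₀` modulo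
`2`, and the class of `rᵀr` modulo `4L` only depends on `r` modulo `2`. -/
theorem exists_normalized_r {β : Type*} [Fintype β] [DecidableEq β] (A D : Matrix β β ℤ_[2]) (b : β)
    (r₀ : β → ℤ_[2]) (a : ℤ_[2]) (ha : IsUnit a)
    (hrow : ∀ j, (Dᵀ * A * D) b j = if j = b then a else 0)
    (h2 : ∀ i j, 2 ∣ A i j + r₀ i * r₀ j) (h4 : ∀ i, 4 ∣ A i i + r₀ i * r₀ i) :
    ∃ r : β → ℤ_[2], (r ᵥ* D = Pi.single b 1) ∧
      (∀ i j, 2 ∣ A i j + r i * r j) ∧ ∀ i, 4 ∣ A i i + r i * r i := by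
  obtain ⟨a', haa⟩ := ha.exists_left_inv
  have ha' : IsUnit a' := IsUnit.of_mul_eq_one _ haa
  choose y hy using h2
  have hA : ∀ i j, A i j = 2 * y i j - r₀ i * r₀ j := fun i j => by
    linear_combination hy i j
  set s : ℤ_[2] := ∑ i, D i b * r₀ i with hs
  set z : β → ℤ_[2] := fun j => ∑ i, D i b * y i j with hz
  have hcol : ∀ j, (Dᵀ * A) b j = 2 * z j - s * r₀ j := by
    intro j
    simp only [Matrix.mul_apply, Matrix.transpose_apply, hA, hs, hz, Finset.mul_sum,
      Finset.sum_mul, ← Finset.sum_sub_distrib]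
    exact Finset.sum_congr rfl fun i _ => by ring
  have has : a = 2 * (∑ j, z j * D j b) - s * s := by
    have h := hrow b
    rw [if_pos rfl, Matrix.mul_apply] at h
    simp only [hcol] at h
    rw [← h]
    nth_rewrite 3 [hs]
    simp only [Finset.mul_sum, ← Finset.sum_sub_distrib]
    exact Finset.sum_congr rfl fun i _ => by ring
  have hs1 : 2 ∣ s - 1 := by
    refine (two_dvd_or s).resolve_left fun h => two_not_dvd_unit ha ?_
    rw [has]
    exact dvd_sub (Dvd.intro _ rfl) (h.mul_right _)
  have ha1 : 2 ∣ a' - 1 := (two_dvd_or a').resolve_left (two_not_dvd_unit ha')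
  obtain ⟨s', hs'⟩ := hs1
  obtain ⟨a'', ha''⟩ := ha1
  have hr : ∀ j, ∃ t, a' * (Dᵀ * A) b j = r₀ j + 2 * t := by
    intro j
    rw [hcol, eq_add_of_sub_eq hs', eq_add_of_sub_eq ha'']
    exact ⟨(2 * a'' + 1) * z j - (2 * a'' * s' + a'' + s' + 1) * r₀ j, by ring⟩
  choose t ht using hr
  refine ⟨fun j => a' * (Dᵀ * A) b j, ?_, ?_, ?_⟩
  · funext j
    have h := hrow j
    rw [Matrix.mul_apply] at h
    simp only [Matrix.vecMul, dotProduct, mul_assoc, ← Finset.mul_sum]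
    rw [h, Pi.single_apply]
    split_ifs <;> simp [haa]
  · intro i j
    simp only [ht]
    exact ⟨y i j + (r₀ i * t j + t i * r₀ j + 2 * t i * t j), by rw [hA]; ring⟩
  · intro i
    simp only [ht]
    obtain ⟨w, hw⟩ := h4 i
    exact ⟨w + r₀ i * t i + t i * t i, by linear_combination hw⟩

/-- Let `T = [[P, F], [Fᵀ, E]]`, where the only nonzero entry of `F` is a `1` in position `(c, b)`,
and `S = 2E - e_bᵀ e_b`. Then `D ∈ Ω̃^{(1)}(S)` iff `1 ⊥ D ∈ Ω̃^{(0)}(T)`: the even matrix `M` with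
`M[1 ⊥ D] = T` is `[[P, F₁], [F₁ᵀ, E₁]]`, where `r`, the row of `F₁` of index `c`, satisfies
`r D = e_b`, and `A = 2E₁ - rᵀr` is the matrix with `A[D] = S`. -/
theorem mem_OmT1_iff_fromBlocks_mem_OmT0 {α β : Type*} [Fintype α] [DecidableEq α] [Fintype β]
    [DecidableEq β] (b : β) (c : α) (P : Matrix α α ℤ_[2]) (F : Matrix α β ℤ_[2])
    (E S : Matrix β β ℤ_[2]) (a : ℤ_[2]) (ha : IsUnit a)
    (hP : P.IsSymm) (hPe : ∀ i, 2 ∣ P i i)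
    (hF : F = Matrix.of fun i j => if i = c then (Pi.single b 1 : β → ℤ_[2]) j else 0)
    (hES : ∀ i j, 2 * E i j = S i j +
      (Pi.single b 1 : β → ℤ_[2]) i * (Pi.single b 1 : β → ℤ_[2]) j)
    (hSb : ∀ j, S b j = if j = b then a else 0)
    (hSd : S.det ≠ 0) (hTd : (Matrix.fromBlocks P F Fᵀ E).det ≠ 0) (D : Matrix β β ℤ_[2]) :
    D ∈ KM.OmT1 2 (KM.q 2 S) ↔ Matrix.fromBlocks (1 : Matrix α α ℤ_[2]) 0 0 D ∈
      KM.OmT0 2 (KM.q 2 (Matrix.fromBlocks P F Fᵀ E)) := by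
  rw [mem_OmT1_iff hSd, mem_OmT0_iff hTd, Matrix.det_fromBlocks_zero₂₁, Matrix.det_one, one_mul]
  refine and_congr_right fun hD => ⟨?_, ?_⟩
  · rintro ⟨A, hs, ⟨r₀, h2, h4⟩, hA⟩
    obtain ⟨r, hr, h2, h4⟩ := exists_normalized_r A D b r₀ a ha (by rw [hA]; exact hSb) h2 h4
    -- `E₁ = (A + rᵀr) / 2` is the lower right block of the even matrix to be found.
    choose E₀ hE₀ using h2
    let E₁ : Matrix β β ℤ_[2] := Matrix.of E₀
    have hE₁ : ∀ i j, 2 * E₁ i j = A i j + r i * r j := fun i j => (hE₀ i j).symm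
    have hE₁m : (2 : ℤ_[2]) • E₁ = A + Matrix.vecMulVec r r := by
      ext i j; simpa [Matrix.vecMulVec_apply] using hE₁ i j
    let F₁ : Matrix α β ℤ_[2] := Matrix.of fun i j => if i = c then r j else 0
    have hF₁ : F₁ * D = F := by
      ext i j
      rw [hF, ← hr]
      by_cases h : i = c <;> simp [F₁, Matrix.mul_apply, h, Matrix.vecMul, dotProduct]
    have hE₁D : Dᵀ * E₁ * D = E := by
      have h : (2 : ℤ_[2]) • (Dᵀ * E₁ * D) = (2 : ℤ_[2]) • E := by
        rw [← Matrix.smul_mul, ← Matrix.mul_smul, hE₁m, Matrix.mul_add, Matrix.add_mul, hA,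
          Matrix.mul_vecMulVec, Matrix.vecMulVec_mul, Matrix.mulVec_transpose, hr]
        ext i j
        simpa [Matrix.vecMulVec_apply] using (hES i j).symm
      ext i j
      have := congrFun (congrFun h i) j
      simpa using this
    refine ⟨Matrix.fromBlocks P F₁ F₁ᵀ E₁, ?_, ?_, ?_⟩
    · refine Matrix.IsSymm.fromBlocks hP rfl ?_
      ext i j
      have h1 := hE₁ i j
      have h2 := hE₁ j i
      rw [hs.apply i j, mul_comm (r j)] at h2
      exact mul_left_cancel₀ two_ne_zero (h2.trans h1.symm)
    · rintro (i | i)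
      · exact hPe i
      · obtain ⟨w, hw⟩ := h4 i
        refine ⟨w, mul_left_cancel₀ (two_ne_zero (α := ℤ_[2])) ?_⟩
        rw [Matrix.fromBlocks_apply₂₂, hE₁, hw]; ring
    · rw [Matrix.fromBlocks_transpose, Matrix.fromBlocks_multiply, Matrix.fromBlocks_multiply]
      simp [hF₁, hE₁D]
      rw [← Matrix.transpose_mul, hF₁]
  · rintro ⟨M, hs, he, hM⟩
    obtain ⟨M₁₁, M₁₂, M₂₁, M₂₂, rfl⟩ : ∃ M₁₁ M₁₂ M₂₁ M₂₂, M = Matrix.fromBlocks M₁₁ M₁₂ M₂₁ M₂₂ :=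
      ⟨_, _, _, _, (Matrix.fromBlocks_toBlocks M).symm⟩
    rw [Matrix.fromBlocks_transpose, Matrix.fromBlocks_multiply, Matrix.fromBlocks_multiply,
      Matrix.fromBlocks_inj] at hM
    simp at hM
    obtain ⟨-, hM₁₂, -, hM₂₂⟩ := hM
    have hs₂ : M₂₂.IsSymm := (Matrix.isSymm_fromBlocks_iff.1 hs).2.2.2
    let r : β → ℤ_[2] := M₁₂ c
    have hr : r ᵥ* D = Pi.single b 1 := by
      funext j
      have := congrFun (congrFun hM₁₂ c) j
      rw [hF, Matrix.of_apply, if_pos rfl] at this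
      exact this
    refine ⟨(2 : ℤ_[2]) • M₂₂ - Matrix.vecMulVec r r, ?_, ⟨r, ?_, ?_⟩, ?_⟩
    · ext i j
      simp [Matrix.vecMulVec_apply, hs₂.apply i j, mul_comm (r j)]
    · intro i j
      simp [Matrix.vecMulVec_apply]
    · intro i
      obtain ⟨w, hw⟩ := he (Sum.inr i)
      rw [Matrix.fromBlocks_apply₂₂] at hw
      refine ⟨w, ?_⟩
      simp [Matrix.vecMulVec_apply, hw]
      ring
    · rw [Matrix.mul_sub, Matrix.sub_mul, Matrix.mul_smul, Matrix.smul_mul, hM₂₂,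
          Matrix.mul_vecMulVec, Matrix.vecMulVec_mul, Matrix.mulVec_transpose, hr]
      ext i j
      have := hES i j
      simp [Matrix.vecMulVec_apply, this]

/-! ### Left orbits and splitting of unimodular summands -/

theorem sameLeft_fromBlocks_iff {α β : Type*} [Fintype α] [DecidableEq α] [Fintype β]
    [DecidableEq β] (W₁ W₂ : Matrix β β ℤ_[2]) :
    KM.SameLeft 2 (Matrix.fromBlocks (1 : Matrix α α ℤ_[2]) 0 0 W₁)
      (Matrix.fromBlocks (1 : Matrix α α ℤ_[2]) 0 0 W₂) ↔ KM.SameLeft 2 W₁ W₂ := by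
  constructor
  · rintro ⟨U, hU, h⟩
    obtain ⟨U₁₁, U₁₂, U₂₁, U₂₂, rfl⟩ : ∃ U₁₁ U₁₂ U₂₁ U₂₂, U = Matrix.fromBlocks U₁₁ U₁₂ U₂₁ U₂₂ :=
      ⟨_, _, _, _, (Matrix.fromBlocks_toBlocks U).symm⟩
    rw [Matrix.fromBlocks_multiply, Matrix.fromBlocks_inj] at h
    simp at h
    obtain ⟨h1, -, h3, h4⟩ := h
    subst h3
    rw [Matrix.det_fromBlocks_zero₂₁, ← h1, Matrix.det_one, one_mul] at hU
    exact ⟨U₂₂, hU, h4⟩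
  · rintro ⟨U, hU, rfl⟩
    refine ⟨Matrix.fromBlocks 1 0 0 U, ?_, ?_⟩
    · rwa [Matrix.det_fromBlocks_zero₂₁, Matrix.det_one, one_mul]
    · simp [Matrix.fromBlocks_multiply]

theorem sameLeft_submatrix {n n' : Type*} [Fintype n] [DecidableEq n] [Fintype n']
    [DecidableEq n'] (e : n' ≃ n) {W₁ W₂ : Matrix n n ℤ_[2]} (h : KM.SameLeft 2 W₁ W₂) :
    KM.SameLeft 2 (W₁.submatrix e e) (W₂.submatrix e e) := by
  obtain ⟨U, hU, rfl⟩ := h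
  exact ⟨U.submatrix e e, by rwa [Matrix.det_submatrix_equiv_self],
    (Matrix.submatrix_mul_equiv _ _ _ _ _).symm⟩

theorem sameLeft_symm {n : Type*} [Fintype n] [DecidableEq n] {W₁ W₂ : Matrix n n ℤ_[2]}
    (h : KM.SameLeft 2 W₁ W₂) : KM.SameLeft 2 W₂ W₁ := by
  obtain ⟨U, hU, rfl⟩ := h
  exact ⟨U⁻¹, Matrix.isUnit_nonsing_inv_det _ hU, by
    rw [← mul_assoc, Matrix.nonsing_inv_mul _ hU, one_mul]⟩

/-- If `G V = (1 | 0)`, the left orbit of `V` contains a matrix `1 ⊥ D`. Since `G` is a left inverse of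
the first block of columns `V₁` of `V`, there is a splitting `ℤ_2^{α ⊕ β} = V₁ ℤ_2^α ⊕ ker G`, and
`ker G` is free of rank `#β`; the coordinates for this splitting form the required element of `GL`. -/
theorem exists_complete {α β : Type*} [Fintype α] [DecidableEq α] [Fintype β]
    [DecidableEq β] (G : Matrix α (α ⊕ β) ℤ_[2]) (V : Matrix (α ⊕ β) (α ⊕ β) ℤ_[2])
    (hG : G * V = Matrix.fromCols 1 0) :
    ∃ D, KM.SameLeft 2 V (Matrix.fromBlocks 1 0 0 D) := by
  let g := Matrix.toLin' G
  let v := Matrix.toLin' (V.submatrix id (Sum.inl : α → α ⊕ β))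
  have hgv : ∀ y, g (v y) = y := by
    intro y
    have : G * V.submatrix id (Sum.inl : α → α ⊕ β) = 1 := by
      ext i j
      simpa [Matrix.mul_apply] using congrFun (congrFun hG i) (Sum.inl j)
    simp only [g, v, Matrix.toLin'_apply, Matrix.mulVec_mulVec, this, Matrix.one_mulVec]
  have hker : ∀ x, (LinearMap.id - v ∘ₗ g : Module.End ℤ_[2] (α ⊕ β → ℤ_[2])) x ∈ LinearMap.ker g := by
    intro x; simp [hgv]
  -- `x ↦ (G x, x - V₁ G x)`, with inverse `(y, z) ↦ V₁ y + z`.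
  let E₀ : (α ⊕ β → ℤ_[2]) ≃ₗ[ℤ_[2]] (α → ℤ_[2]) × LinearMap.ker g :=
    LinearEquiv.ofLinearMap
      (g.prod ((LinearMap.id - v ∘ₗ g).codRestrict (LinearMap.ker g) hker))
      (v.coprod (LinearMap.ker g).subtype)
      (by
        apply LinearMap.ext
        rintro ⟨y, z, hz⟩
        have hz' : g z = 0 := hz
        refine Prod.ext ?_ (Subtype.ext ?_) <;> simp [hgv, hz'])
      (by apply LinearMap.ext; intro x; simp)
  have hfr : Module.finrank ℤ_[2] (LinearMap.ker g) = Module.finrank ℤ_[2] (β → ℤ_[2]) := by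
    have := E₀.finrank_eq
    rw [Module.finrank_prod] at this
    simp only [Module.finrank_fintype_fun_eq_card, Fintype.card_sum] at this ⊢
    omega
  let E₁ : LinearMap.ker g ≃ₗ[ℤ_[2]] (β → ℤ_[2]) := LinearEquiv.ofFinrankEq _ _ hfr
  let E : (α ⊕ β → ℤ_[2]) ≃ₗ[ℤ_[2]] (α ⊕ β → ℤ_[2]) :=
    (E₀.trans ((LinearEquiv.refl _ _).prodCongr E₁)).trans
      (LinearEquiv.sumArrowLequivProdArrow α β ℤ_[2] ℤ_[2]).symm
  have hE1 : ∀ x i, E x (Sum.inl i) = g x i := fun x i => rfl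
  have hE2 : ∀ y i, E (v y) (Sum.inr i) = 0 := by
    intro y i
    have h : E₀ (v y) = (y, 0) := by
      refine Prod.ext (hgv y) (Subtype.ext ?_)
      change v y - v (g (v y)) = 0
      rw [hgv, sub_self]
    change E₁ (E₀ (v y)).2 i = 0
    rw [h, map_zero]; rfl
  let U := LinearMap.toMatrix' (E : (α ⊕ β → ℤ_[2]) →ₗ[ℤ_[2]] (α ⊕ β → ℤ_[2]))
  have hU : IsUnit U.det := by
    have : U * LinearMap.toMatrix' (E.symm : (α ⊕ β → ℤ_[2]) →ₗ[ℤ_[2]] (α ⊕ β → ℤ_[2])) = 1 := by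
      rw [← LinearMap.toMatrix'_comp]; simp
    exact Matrix.isUnit_det_of_right_inverse this
  have hUV : ∀ i j, (U * V) i j = E (fun l => V l j) i := by
    intro i j
    have : U *ᵥ (fun l => V l j) = E (fun l => V l j) := LinearMap.toMatrix'_mulVec _ _
    rw [← this]; rfl
  refine ⟨(U * V).toBlocks₂₂, U, hU, ?_⟩
  have hcol : ∀ j : α, (fun l => V l (Sum.inl j)) = v (Pi.single j 1) := by
    intro j
    simp only [v, Matrix.toLin'_apply, Matrix.mulVec_single_one]
    rfl
  ext i j
  rcases i with i | i
  · have h := congrFun (congrFun hG i) j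
    rw [hUV, hE1]
    have h' : g (fun l => V l j) i = (G * V) i j := rfl
    rw [h', h]
    rcases j with j | j <;> simp
  · rcases j with j | j
    · rw [hUV, hcol, hE2]; simp
    · simp [Matrix.toBlocks₂₂]

/-- A unimodular orthogonal summand of a lattice splits off every integral overlattice: if `M[V]` is
`P ⊥ Q` with `P` unimodular, then the left orbit of `V` contains a matrix `1 ⊥ D`. -/
theorem exists_split {α β : Type*} [Fintype α] [DecidableEq α] [Fintype β]
    [DecidableEq β] (P : Matrix α α ℤ_[2]) (Q : Matrix β β ℤ_[2]) (hP : IsUnit P.det)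
    (M V : Matrix (α ⊕ β) (α ⊕ β) ℤ_[2]) (h : Vᵀ * M * V = Matrix.fromBlocks P 0 0 Q) :
    ∃ D, KM.SameLeft 2 V (Matrix.fromBlocks 1 0 0 D) := by
  refine exists_complete (P⁻¹ * (Vᵀ * M).submatrix Sum.inl id) V ?_
  have h1 : (Vᵀ * M).submatrix Sum.inl id * V = Matrix.fromCols P 0 := by
    ext i j
    have := congrFun (congrFun h (Sum.inl i)) j
    refine Eq.trans (b := (Vᵀ * M * V) (Sum.inl i) j) rfl (this.trans ?_)
    rcases j with j | j <;> simp
  rw [Matrix.mul_assoc, h1, Matrix.mul_fromCols, Matrix.nonsing_inv_mul _ hP, Matrix.mul_zero]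

/-! ### Reindexing by `e8` -/

theorem finSum_inl : (finSumFinEquiv (Sum.inl 0) : Fin (1 + 1)) = 0 := rfl

theorem finSum_inr : (finSumFinEquiv (Sum.inr 0) : Fin (1 + 1)) = 1 := rfl

theorem finSum_symm_zero : (finSumFinEquiv (m := 1) (n := 1)).symm 0 = Sum.inl 0 := rfl

theorem finSum_symm_one : (finSumFinEquiv (m := 1) (n := 1)).symm 1 = Sum.inr 0 := rfl

/-- In the block structure `(n₀ + 1) + (1 + k)`, the matrix `Θ ⊥ [[2,1],[1,2x]] ⊥ 2B₁` has the shape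
`[[P, F], [Fᵀ, E]]` with a single nonzero entry in `F`. -/
theorem target_submatrix_e8 (n₀ k : ℕ) (Θ : Matrix (Fin n₀) (Fin n₀) ℤ_[2]) (x : ℤ_[2])
    (B₁ : Matrix (Fin k) (Fin k) ℤ_[2]) :
    (Matrix.fromBlocks Θ 0 0
      (Matrix.fromBlocks !![(2 : ℤ_[2]), 1; 1, 2 * x] 0 0 ((2 : ℤ_[2]) • B₁))).submatrix
        (e8 n₀ k) (e8 n₀ k) =
    Matrix.fromBlocks (Matrix.fromBlocks Θ 0 0 (Matrix.of fun (_ _ : Fin 1) => (2 : ℤ_[2])))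
      (Matrix.of fun i j => if i = Sum.inr 0 then
        (Pi.single (Sum.inl 0) 1 : Fin 1 ⊕ Fin k → ℤ_[2]) j else 0)
      (Matrix.of fun i j => if i = Sum.inr 0 then
        (Pi.single (Sum.inl 0) 1 : Fin 1 ⊕ Fin k → ℤ_[2]) j else 0)ᵀ
      (Matrix.fromBlocks (Matrix.of fun (_ _ : Fin 1) => 2 * x) 0 0 ((2 : ℤ_[2]) • B₁)) := by
  ext i j
  rcases i with (i | i) | (i | i) <;> rcases j with (j | j) | (j | j) <;>
    (try fin_cases i) <;> (try fin_cases j) <;> simp [e8, Pi.single_apply, finSum_inl, finSum_inr]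

theorem submatrix_assoc (n₀ k : ℕ) (D : Matrix (Fin k) (Fin k) ℤ_[2]) :
    (Matrix.fromBlocks (1 : Matrix (Fin n₀ ⊕ Fin 2) (Fin n₀ ⊕ Fin 2) ℤ_[2]) 0 0 D).submatrix
      (Equiv.sumAssoc _ _ _).symm (Equiv.sumAssoc _ _ _).symm =
    (Matrix.fromBlocks (1 : Matrix (Fin n₀ ⊕ Fin 1) (Fin n₀ ⊕ Fin 1) ℤ_[2]) 0 0
      (Matrix.fromBlocks (1 : Matrix (Fin 1) (Fin 1) ℤ_[2]) 0 0 D)).submatrix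
        (e8 n₀ k).symm (e8 n₀ k).symm := by
  ext i j
  rcases i with i | i | i <;> rcases j with j | j | j <;>
    (try fin_cases i) <;> (try fin_cases j) <;> simp [e8, finSum_symm_zero, finSum_symm_one, Matrix.one_apply]

end KMaux

/-- `D ↦ 1_{n₀+1} ⊥ D` induces a bijection
`GL\Ω̃^{(1)}((a) ⊥ 4B₁) ≃ GL\Ω̃^{(0)}(Θ ⊥ [[2,1],[1,(1+a)/2]] ⊥ 2B₁)`
compatible with `D_{·,i}`. -/
theorem statement8 (n₀ k : ℕ) (hn₀ : Even n₀) (hme : Even (n₀ + 2 + k))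
    (Θ : Matrix (Fin n₀) (Fin n₀) ℤ_[2]) (hΘs : Θ.IsSymm) (hΘu : IsUnit Θ.det)
    (hΘe : ∀ i, ∃ x : ℤ_[2], Θ i i = 2 * x)
    (a : ℤ_[2]) (ha : ∃ x : ℤ_[2], a = -1 + 4 * x)
    (B₁ : Matrix (Fin k) (Fin k) ℤ_[2]) (hB₁s : B₁.IsSymm) (hB₁d : B₁.det ≠ 0) :
    let φ : Matrix (Fin 1 ⊕ Fin k) (Fin 1 ⊕ Fin k) ℤ_[2] →
        Matrix (Fin n₀ ⊕ (Fin 2 ⊕ Fin k)) (Fin n₀ ⊕ (Fin 2 ⊕ Fin k)) ℤ_[2] :=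
      fun D => (Matrix.fromBlocks (1 : Matrix (Fin n₀ ⊕ Fin 1) (Fin n₀ ⊕ Fin 1) ℤ_[2]) 0 0
        D).submatrix (e8 n₀ k).symm (e8 n₀ k).symm
    let Sa : Matrix (Fin 1 ⊕ Fin k) (Fin 1 ⊕ Fin k) ℚ_[2] :=
      Matrix.fromBlocks (Matrix.of fun (_ : Fin 1) (_ : Fin 1) => (a : ℚ_[2])) 0 0
        ((4 : ℚ_[2]) • KM.q 2 B₁)
    let Tg : Matrix (Fin n₀ ⊕ (Fin 2 ⊕ Fin k)) (Fin n₀ ⊕ (Fin 2 ⊕ Fin k)) ℚ_[2] :=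
      Matrix.fromBlocks (KM.q 2 Θ) 0 0
        (Matrix.fromBlocks (!![(2 : ℚ_[2]), 1; 1, (1 + (a : ℚ_[2])) / 2]) 0 0
          ((2 : ℚ_[2]) • KM.q 2 B₁))
    KM.InducesLeftBij 2 φ (KM.OmT1 2 Sa) (KM.OmT0 2 Tg) ∧
      ∀ i : ℕ, ∀ W ∈ KM.OmT1 2 Sa, (W ∈ KM.Dset 2 i ↔ φ W ∈ KM.Dset 2 i) := by
  intro φ Sa Tg
  obtain ⟨x, hx⟩ := ha
  have hau : IsUnit a := by
    have h1 : IsUnit (a + 2 * (-(2 * x))) := by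
      have : a + 2 * (-(2 * x)) = -1 := by rw [hx]; ring
      rw [this]; exact isUnit_one.neg
    refine (IsLocalRing.isUnit_or_isUnit_of_isUnit_add h1).resolve_right fun h => ?_
    exact KMaux.two_not_dvd_unit h (Dvd.intro _ rfl)
  let Hz : Matrix (Fin 2) (Fin 2) ℤ_[2] := !![(2 : ℤ_[2]), 1; 1, 2 * x]
  let Sz : Matrix (Fin 1 ⊕ Fin k) (Fin 1 ⊕ Fin k) ℤ_[2] :=
    Matrix.fromBlocks (Matrix.of fun _ _ => a) 0 0 ((4 : ℤ_[2]) • B₁)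
  let Tz : Matrix (Fin n₀ ⊕ (Fin 2 ⊕ Fin k)) (Fin n₀ ⊕ (Fin 2 ⊕ Fin k)) ℤ_[2] :=
    Matrix.fromBlocks Θ 0 0 (Matrix.fromBlocks Hz 0 0 ((2 : ℤ_[2]) • B₁))
  have hSa : Sa = KM.q 2 Sz := by
    ext i j
    rcases i with i | i <;> rcases j with j | j <;> simp [Sa, Sz, KM.q, KMaux.coe_four]
  -- The lower right entry `(1 + a) / 2 = 2x` is an even integer.
  have hTg : Tg = KM.q 2 Tz := by
    have h2 : (1 + (a : ℚ_[2])) / 2 = 2 * (x : ℚ_[2]) := by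
      rw [hx]; push_cast [KMaux.coe_four]; ring
    ext i j
    rcases i with i | i | i <;> rcases j with j | j | j <;>
      simp [Tg, Tz, KM.q, KMaux.coe_two]
    rw [h2]
    fin_cases i <;> fin_cases j <;> simp [Hz, KMaux.coe_two]
  have hSd : Sz.det ≠ 0 := by
    simp only [Sz]
    rw [Matrix.det_fromBlocks_zero₂₁, Matrix.det_smul]
    refine mul_ne_zero ?_ (mul_ne_zero (pow_ne_zero _ (by norm_num)) hB₁d)
    simpa using hau.ne_zero
  have hHd : Hz.det = a := by
    simp [Hz, Matrix.det_fin_two]; rw [hx]; ring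
  have hTd : Tz.det ≠ 0 := by
    simp only [Tz]
    rw [Matrix.det_fromBlocks_zero₂₁, Matrix.det_fromBlocks_zero₂₁, Matrix.det_smul, hHd]
    exact mul_ne_zero hΘu.ne_zero (mul_ne_zero hau.ne_zero
      (mul_ne_zero (pow_ne_zero _ two_ne_zero) hB₁d))
  have hblock := KMaux.target_submatrix_e8 n₀ k Θ x B₁
  have hφ : ∀ D, (φ D).submatrix (e8 n₀ k) (e8 n₀ k) =
      Matrix.fromBlocks (1 : Matrix (Fin n₀ ⊕ Fin 1) (Fin n₀ ⊕ Fin 1) ℤ_[2]) 0 0 D := by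
    intro D
    simp [φ, Matrix.submatrix_submatrix]
  have hTd' : (Tz.submatrix (e8 n₀ k) (e8 n₀ k)).det ≠ 0 := by
    rwa [Matrix.det_submatrix_equiv_self]
  have hmem : ∀ D, D ∈ KM.OmT1 2 Sa ↔ φ D ∈ KM.OmT0 2 Tg := by
    intro D
    rw [hSa, hTg]
    have h1 : D ∈ KM.OmT1 2 (KM.q 2 Sz) ↔
        Matrix.fromBlocks (1 : Matrix (Fin n₀ ⊕ Fin 1) (Fin n₀ ⊕ Fin 1) ℤ_[2]) 0 0 D ∈
          KM.OmT0 2 (KM.q 2 (Tz.submatrix (e8 n₀ k) (e8 n₀ k))) := by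
      have h0 := hTd'
      simp only [Tz, Hz] at h0 ⊢
      rw [hblock] at h0 ⊢
      refine KMaux.mem_OmT1_iff_fromBlocks_mem_OmT0 (Sum.inl 0) (Sum.inr 0) _ _ _ _ a hau
        ?_ ?_ rfl ?_ ?_ hSd h0 D
      · refine Matrix.IsSymm.fromBlocks hΘs (by simp) ?_
        ext; rfl
      · rintro (i | i)
        · obtain ⟨y, hy⟩ := hΘe i
          exact ⟨y, by simpa using hy⟩
        · simp
      · rintro (i | i) (j | j)
        · fin_cases i; fin_cases j; simp [Sz, hx]; ring
        · simp [Sz]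
        · simp [Sz]
        · simp [Sz]; ring
      · rintro (j | j)
        · fin_cases j; simp [Sz]
        · simp [Sz]
    rw [h1]
    constructor
    · intro h
      have := KMaux.submatrix_mem_OmT0 (e8 n₀ k).symm hTd' h
      simpa [Matrix.submatrix_submatrix] using this
    · intro h
      have := KMaux.submatrix_mem_OmT0 (e8 n₀ k) hTd h
      rwa [hφ] at this
  refine ⟨⟨fun W hW => (hmem W).1 hW, ?_, ?_⟩, ?_⟩
  · intro W₁ _ W₂ _
    rw [← KMaux.sameLeft_fromBlocks_iff (α := Fin n₀ ⊕ Fin 1)]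
    constructor
    · exact KMaux.sameLeft_submatrix _
    · intro h
      have := KMaux.sameLeft_submatrix (e8 n₀ k) h
      rwa [hφ, hφ] at this
  · intro V hV
    -- `Θ ⊥ Hz` is unimodular, so it splits off the overlattice given by `V`.
    rw [hTg] at hV
    have hV1 := KMaux.submatrix_mem_OmT0 (Equiv.sumAssoc (Fin n₀) (Fin 2) (Fin k)) hTd hV
    rw [KMaux.mem_OmT0_iff (by rwa [Matrix.det_submatrix_equiv_self])] at hV1
    obtain ⟨-, M, -, -, hM⟩ := hV1
    have hT : Tz.submatrix (Equiv.sumAssoc (Fin n₀) (Fin 2) (Fin k))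
        (Equiv.sumAssoc (Fin n₀) (Fin 2) (Fin k)) =
        Matrix.fromBlocks (Matrix.fromBlocks Θ 0 0 Hz) 0 0 ((2 : ℤ_[2]) • B₁) := by
      ext i j
      rcases i with (i | i) | i <;> rcases j with (j | j) | j <;> simp [Tz]
    rw [hT] at hM
    obtain ⟨D, hD⟩ := KMaux.exists_split _ _ (by
      rw [Matrix.det_fromBlocks_zero₂₁, hHd]; exact hΘu.mul hau) _ _ hM
    have hD' := KMaux.sameLeft_symm
      (KMaux.sameLeft_submatrix (Equiv.sumAssoc (Fin n₀) (Fin 2) (Fin k)).symm hD)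
    rw [KMaux.submatrix_assoc, Matrix.submatrix_submatrix, Equiv.self_comp_symm,
      Matrix.submatrix_id_id] at hD'
    refine ⟨Matrix.fromBlocks 1 0 0 D, (hmem _).2 ?_, hD'⟩
    rw [hTg]
    exact KMaux.SameLeft.mem_OmT0 hTd hV hD'
  · intro i W _
    rw [← KMaux.fromBlocks_mem_Dset_iff (α := Fin n₀ ⊕ Fin 1)]
    exact (KMaux.submatrix_mem_Dset_iff _ _ _).symm
end
end

section
/- Let m be a positive even integer, let n₀ be an even integer with 0 ≤ n₀ ≤ m-2, let Θ ∈ GL_{n₀}(ℤ_2) ∩ S_{n₀}(ℤ_2)_e, and let B₁ ∈ S_{m-n₀-1}(ℤ_2)^×. Then there exists a bijection from GL_{m-n₀-1}(ℤ_2)\Ω̃^{(1)}(4B₁) onto GL_m(ℤ_2)\Ω̃^{(0)}(Θ ⊥ (2) ⊥ 2B₁) which, for every i ≥ 0, maps the orbits contained in D_{m-n₀-1,i} onto the orbits contained in D_{m,i}. (This bijection is not induced by D ↦ 1_{n₀+1} ⊥ D; it sends the class of D to the class of [[1, r],[0, D]] for a suitable row vector r depending on D.) -/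
/-!
An orbit of `Ω̃^{(0)}(B)` is an even overlattice of the lattice with Gram matrix `B`. For
`B = Θ ⊥ (2) ⊥ 2B₁` the unimodular part `Θ` splits off every overlattice
(`exists_unimodular_split`), and the vector of norm `2` remains primitive, because half of it would
have norm `1/2` (`exists_two_split`). So every orbit contains a matrix `1 ⊥ [[1, x], [0, W]]`, and
expanding `(2) ⊥ 2B₁ = [[2, -r], [-rᵀ, D]][[[1, x], [0, W]]]` with `D` even gives `rW = 2x` and
`4B₁ = (2D - rᵀr)[W]`, which is exactly the condition `W ∈ Ω̃^{(1)}(4B₁)`.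

Conversely, for `W ∈ Ω̃^{(1)}(4B₁)` with associated row `r`, the diagonal of
`4B₁ = (2D - rᵀr)[W]` shows that `rW` is even (`exists_good`), so that `x = rW/2` defines an element
of `Ω̃^{(0)}` (`Good.form`). Since `r` is unique modulo `2`, `x` is unique modulo the row lattice of
`W`, and the resulting left coset depends only on that of `W` (`Good.unique`).

Finally `[[1, x], [0, W]] = (1 ⊥ W) [[1, x], [0, 1]]`, so compatibility with the double cosets
reduces to the statement that `W ∈ D_{s,i}` if and only if `1 ⊥ W ∈ D_{m,i}` (`Dset_block_iff`),
which follows from the Smith normal form and a comparison of determinants.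
-/

open Matrix Filter

open scoped Classical

noncomputable section

namespace KMProof

/-! ### Completion of a split column block, and Smith normal form -/

section Algebra

variable {R : Type*} [CommRing R]

theorem isUnit_det_of_mul_eq_one {n : Type*} [Fintype n] [DecidableEq n] {A B : Matrix n n R}
    (h : A * B = 1) : IsUnit A.det := by
  have := congrArg Matrix.det h
  rw [det_mul, det_one] at this
  exact IsUnit.of_mul_eq_one _ this

/-- Over a principal ideal domain, a block of rows `T` with a right inverse `Z` extends to an
invertible matrix whose remaining rows `N` annihilate `Z`: these rows are the coordinates of the
projection `1 - Z * T` onto the free module `ker T`. -/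
theorem exists_completion [IsDomain R] [IsPrincipalIdealRing R] {a b : Type*}
    [Fintype a] [DecidableEq a] [Fintype b] [DecidableEq b]
    (T : Matrix a (a ⊕ b) R) (Z : Matrix (a ⊕ b) a R) (h : T * Z = 1) :
    ∃ N : Matrix b (a ⊕ b) R, IsUnit (fromRows T N).det ∧ N * Z = 0 := by
  have hTZ : ∀ v, T *ᵥ (Z *ᵥ v) = v := fun v => by rw [mulVec_mulVec, h, one_mulVec]
  have hsurj : LinearMap.range T.mulVecLin = ⊤ :=
    LinearMap.range_eq_top.2 fun v => ⟨Z *ᵥ v, hTZ v⟩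
  have hrank : Module.finrank R (LinearMap.ker T.mulVecLin) = Fintype.card b := by
    have := (LinearMap.ker T.mulVecLin).finrank_quotient_add_finrank
    rw [T.mulVecLin.quotKerEquivRange.finrank_eq, hsurj, finrank_top] at this
    simp only [Module.finrank_fintype_fun_eq_card, Fintype.card_sum] at this
    omega
  let c : Module.Basis b R (LinearMap.ker T.mulVecLin) :=
    (Module.finBasisOfFinrankEq R _ hrank).reindex (Fintype.equivFin b).symm
  let π : (a ⊕ b → R) →ₗ[R] LinearMap.ker T.mulVecLin :=
    (LinearMap.id - Z.mulVecLin ∘ₗ T.mulVecLin).codRestrict _ (fun v => by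
      rw [LinearMap.mem_ker]
      simp [hTZ, mulVec_sub, -mulVec_mulVec])
  let K : Matrix (a ⊕ b) b R := Matrix.of fun i j => (c j : a ⊕ b → R) i
  let N : Matrix b (a ⊕ b) R := LinearMap.toMatrix' (c.equivFun.toLinearMap ∘ₗ π)
  have hTc : ∀ j, T *ᵥ (c j : a ⊕ b → R) = 0 := fun j => (c j).2
  have hTK : T * K = 0 := by
    ext i j
    exact congrFun (hTc j) i
  have hNv : ∀ v, N *ᵥ v = c.equivFun (π v) := fun v => by
    rw [← toLin'_apply, toLin'_toMatrix']; rfl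
  have hNZ : N * Z = 0 := by
    apply Matrix.mulVec_injective
    funext v
    rw [← mulVec_mulVec, hNv, zero_mulVec]
    have : π (Z *ᵥ v) = 0 := by
      ext1; simp [π, hTZ, -mulVec_mulVec]
    rw [this, map_zero]
  have hNK : N * K = 1 := by
    ext i j
    have h1 : (N * K) i j = (N *ᵥ (c j : a ⊕ b → R)) i := rfl
    have h2 : π (c j : a ⊕ b → R) = c j := by
      ext1; simp [π, -mulVec_mulVec]
    rw [h1, hNv, h2]
    simp [one_apply, eq_comm]
  refine ⟨N, isUnit_det_of_mul_eq_one (B := fromCols Z K) ?_, hNZ⟩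
  rw [fromRows_mul_fromCols, h, hTK, hNZ, hNK, fromBlocks_one]

/-- Smith normal form of a nonsingular square matrix. -/
theorem exists_smith [IsDomain R] [IsPrincipalIdealRing R] {n : Type*} [Fintype n] [DecidableEq n]
    (W : Matrix n n R) (hW : W.det ≠ 0) :
    ∃ (P Q : Matrix n n R) (a : n → R), IsUnit P.det ∧ IsUnit Q.det ∧
      W = P * diagonal a * Q := by
  have hinj : Function.Injective W.mulVecLin := mulVec_injective_of_det_ne_zero hW
  let e := LinearEquiv.ofInjective W.mulVecLin hinj
  obtain ⟨b', a, ab', hab⟩ := Submodule.exists_smith_normal_form_of_rank_eq (Pi.basisFun R n)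
    (N := LinearMap.range W.mulVecLin) e.finrank_eq.symm
  let g : (n → R) ≃ₗ[R] (n → R) := e ≪≫ₗ ab'.equivFun
  refine ⟨LinearMap.toMatrix' b'.equivFun.symm.toLinearMap, LinearMap.toMatrix' g.toLinearMap, a,
    ?_, ?_, ?_⟩
  · rw [LinearMap.det_toMatrix']; exact LinearEquiv.isUnit_det' _
  · rw [LinearMap.det_toMatrix']; exact LinearEquiv.isUnit_det' _
  · apply Matrix.mulVec_injective
    funext v
    rw [← mulVec_mulVec, ← mulVec_mulVec, ← toLin'_apply (LinearMap.toMatrix' _),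
      ← toLin'_apply (LinearMap.toMatrix' _), toLin'_toMatrix', toLin'_toMatrix']
    have h1 : W *ᵥ v = (e v : n → R) := rfl
    have h2 : (e v : n → R) = ((∑ i, g v i • ab' i : LinearMap.range W.mulVecLin) : n → R) := by
      congr 1
      exact (ab'.sum_equivFun (e v)).symm
    rw [h1, h2]
    simp [Module.Basis.equivFun_symm_apply, hab, mulVec_diagonal, smul_smul, mul_comm]

end Algebra

/-! ### The double cosets `D_{m,i}` -/

theorem two_prime : Prime (2 : ℤ_[2]) := by
  simpa using PadicInt.prime_p (p := 2)

/-- A left divisor of `2` lies in some `D_{m,k}`: its elementary divisors divide `2`, so each is a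
unit or an associate of `2`. -/
theorem mem_Dset_of_dvd_two {n : Type*} [Fintype n] [DecidableEq n]
    (W W' : Matrix n n ℤ_[2]) (hW : W.det ≠ 0) (h : W * W' = (2 : ℤ_[2]) • 1) :
    ∃ k, W ∈ KM.Dset 2 k := by
  obtain ⟨P, Q, a, hP, hQ, rfl⟩ := exists_smith W hW
  have hdvd : ∀ i, a i ∣ 2 := by
    have h1 : diagonal a * (Q * W' * P) = (2 : ℤ_[2]) • 1 := by
      have h2 : P * (diagonal a * (Q * W' * P)) = P * ((2 : ℤ_[2]) • 1) := by
        calc _ = (P * diagonal a * Q * W') * P := by simp only [Matrix.mul_assoc]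
          _ = _ := by rw [h]; simp
      exact (Matrix.isUnit_iff_isUnit_det _ |>.2 hP).mul_right_injective h2
    intro i
    have h3 := congrFun (congrFun h1 i) i
    rw [diagonal_mul] at h3
    exact ⟨_, by simpa using h3.symm⟩
  let s : Finset n := Finset.univ.filter fun i => ¬ IsUnit (a i)
  have hu : ∀ i, ∃ u : ℤ_[2], IsUnit u ∧ a i = u * (if i ∈ s then ((2 : ℕ) : ℤ_[2]) else 1) := by
    intro i
    by_cases hi : IsUnit (a i)
    · exact ⟨a i, hi, by simp [s, hi]⟩
    · obtain ⟨x, hx⟩ := hdvd i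
      rcases two_prime.irreducible.isUnit_or_isUnit hx with h' | ⟨u, rfl⟩
      · exact absurd h' hi
      · refine ⟨↑u⁻¹, Units.isUnit _, ?_⟩
        simp [s, hi, hx]
        rw [mul_left_comm]; simp
  choose u hu1 hu2 using hu
  refine ⟨s.card, s, rfl, P * diagonal u, Q, ?_, hQ, ?_⟩
  · rw [det_mul, det_diagonal]
    exact hP.mul (by simpa [IsUnit.prod_univ_iff] using hu1)
  · rw [Matrix.mul_assoc P (diagonal u), diagonal_mul_diagonal]
    congr 3
    funext i
    exact hu2 i

/-- The determinant recovers the index `k` of the double coset. -/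
theorem Dset_det {n : Type*} [Fintype n] [DecidableEq n] {W : Matrix n n ℤ_[2]} {k : ℕ}
    (h : W ∈ KM.Dset 2 k) : Associated W.det (2 ^ k) := by
  obtain ⟨s, rfl, U, V, hU, hV, rfl⟩ := h
  rw [det_mul, det_mul, det_diagonal]
  have : (∏ i, if i ∈ s then ((2 : ℕ) : ℤ_[2]) else 1) = 2 ^ s.card := by
    simp
  rw [this]
  obtain ⟨u, hu⟩ := hU
  obtain ⟨v, hv⟩ := hV
  rw [← hu, ← hv]
  refine Associated.symm ⟨u * v, ?_⟩
  push_cast; ring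

theorem Dset_dvd_two {n : Type*} [Fintype n] [DecidableEq n] {W : Matrix n n ℤ_[2]} {k : ℕ}
    (h : W ∈ KM.Dset 2 k) : ∃ W', W * W' = (2 : ℤ_[2]) • 1 := by
  obtain ⟨s, rfl, U, V, hU, hV, rfl⟩ := h
  refine ⟨V⁻¹ * diagonal (fun i => if i ∈ s then 1 else 2) * U⁻¹, ?_⟩
  have hd : diagonal (fun j => if j ∈ s then ((2 : ℕ) : ℤ_[2]) else 1) *
      diagonal (fun i => if i ∈ s then 1 else 2) = (2 : ℤ_[2]) • (1 : Matrix n n ℤ_[2]) := by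
    rw [diagonal_mul_diagonal, smul_one_eq_diagonal]
    congr 1; funext i; split_ifs <;> simp
  calc _ = U * (diagonal (fun j => if j ∈ s then ((2 : ℕ) : ℤ_[2]) else 1) * ((V * V⁻¹) *
      diagonal (fun i => if i ∈ s then 1 else 2))) * U⁻¹ := by simp only [Matrix.mul_assoc]
    _ = _ := by rw [mul_nonsing_inv _ hV, Matrix.one_mul, hd]; simp [mul_nonsing_inv _ hU]

theorem Dset_mul_right {n : Type*} [Fintype n] [DecidableEq n] {W X : Matrix n n ℤ_[2]} {k : ℕ}
    (hX : IsUnit X.det) (h : W ∈ KM.Dset 2 k) : W * X ∈ KM.Dset 2 k := by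
  obtain ⟨s, hs, U, V, hU, hV, rfl⟩ := h
  exact ⟨s, hs, U, V * X, hU, by rw [det_mul]; exact hV.mul hX, by simp only [Matrix.mul_assoc]⟩

theorem Dset_block {a b : Type*} [Fintype a] [DecidableEq a] [Fintype b] [DecidableEq b]
    (W : Matrix b b ℤ_[2]) (k : ℕ) :
    W ∈ KM.Dset 2 k → fromBlocks (1 : Matrix a a ℤ_[2]) 0 0 W ∈ KM.Dset 2 k := by
  rintro ⟨s, hs, U, V, hU, hV, rfl⟩
  refine ⟨s.map Function.Embedding.inr, by simpa using hs, fromBlocks 1 0 0 U, fromBlocks 1 0 0 V,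
    by simpa using hU, by simpa using hV, ?_⟩
  have hd : diagonal (fun j : a ⊕ b =>
      if j ∈ s.map Function.Embedding.inr then ((2 : ℕ) : ℤ_[2]) else 1) =
      fromBlocks 1 0 0 (diagonal (fun j => if j ∈ s then ((2 : ℕ) : ℤ_[2]) else 1)) := by
    rw [← diagonal_one, fromBlocks_diagonal]
    congr 1; funext j; rcases j with j | j <;> simp
  rw [hd]
  simp [fromBlocks_multiply]

/-- Bordering by an identity block preserves and reflects membership in `D_{m,k}`. The block `Q` is
removed by a unimodular column operation; in the converse direction `W` divides `2`, hence lies in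
some `D_{m,j}`, and comparing determinants gives `j = k`. -/
theorem Dset_block_iff {a b : Type*} [Fintype a] [DecidableEq a] [Fintype b] [DecidableEq b]
    (W : Matrix b b ℤ_[2]) (hW : W.det ≠ 0) (Q : Matrix a b ℤ_[2]) (k : ℕ) :
    W ∈ KM.Dset 2 k ↔ fromBlocks (1 : Matrix a a ℤ_[2]) Q 0 W ∈ KM.Dset 2 k := by
  have e1 : fromBlocks (1 : Matrix a a ℤ_[2]) Q 0 W =
      fromBlocks 1 0 0 W * fromBlocks 1 Q 0 1 := by simp [fromBlocks_multiply]
  have e2 : fromBlocks (1 : Matrix a a ℤ_[2]) 0 0 W =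
      fromBlocks (1 : Matrix a a ℤ_[2]) Q 0 W * fromBlocks 1 (-Q) 0 1 := by
    simp [fromBlocks_multiply]
  constructor
  · intro h
    rw [e1]
    exact Dset_mul_right (by simp) (Dset_block W k h)
  · intro h
    have h' : fromBlocks (1 : Matrix a a ℤ_[2]) 0 0 W ∈ KM.Dset 2 k := by
      rw [e2]
      exact Dset_mul_right (by simp) h
    obtain ⟨W', hW'⟩ := Dset_dvd_two h'
    obtain ⟨j, hj⟩ := mem_Dset_of_dvd_two W W'.toBlocks₂₂ hW (by
      rw [← fromBlocks_toBlocks W', ← fromBlocks_one, fromBlocks_multiply, fromBlocks_smul] at hW'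
      have := (fromBlocks_inj.1 hW').2.2.2
      simpa using this)
    have h1 := (Dset_det h').symm.trans (Dset_det (Dset_block (a := a) W j hj))
    have : k = j := by
      by_contra hne
      rcases lt_or_gt_of_ne hne with hlt | hlt
      · have := (pow_dvd_pow_iff two_prime.ne_zero two_prime.not_isUnit).1 h1.symm.dvd
        omega
      · have := (pow_dvd_pow_iff two_prime.ne_zero two_prime.not_isUnit).1 h1.dvd
        omega
    exact this ▸ hj

/-! ### Even matrices and integral descriptions of the two sets -/

section Bridge

/-- Even symmetric matrices: symmetric with diagonal entries divisible by `2`. -/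
def Ev {R n : Type*} [CommRing R] (D : Matrix n n R) : Prop := D.IsSymm ∧ ∀ i, 2 ∣ D i i

/-- Evenness is preserved by `D ↦ D[X]`, since an even matrix has the form `E + Eᵀ`. -/
theorem Ev.congr {R n l : Type*} [CommRing R] [Fintype n] {D : Matrix n n R} (hD : Ev D)
    (X : Matrix n l R) : Ev (Xᵀ * D * X) := by
  classical
  let e := Fintype.equivFin n
  choose d hd using hD.2
  let E : Matrix n n R := Matrix.of fun i j =>
    if e i < e j then D i j else if i = j then d i else 0
  have hE : D = E + Eᵀ := by
    ext i j
    simp only [E, Matrix.add_apply, transpose_apply, of_apply]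
    rcases lt_trichotomy (e i) (e j) with h | h | h
    · have h1 : i ≠ j := fun h' => by simp [h'] at h
      simp [h, h.not_gt, h1.symm]
    · have h1 : i = j := e.injective h
      subst h1
      simp [hd, two_mul]
    · have h1 : i ≠ j := fun h' => by simp [h'] at h
      simp [h, h.not_gt, h1, hD.1.apply i j]
  refine ⟨?_, fun i => ⟨(Xᵀ * E * X) i i, ?_⟩⟩
  · rw [Matrix.IsSymm]
    simp only [transpose_mul, transpose_transpose, hD.1.eq, Matrix.mul_assoc]
  · have h : Xᵀ * D * X = Xᵀ * E * X + (Xᵀ * E * X)ᵀ := by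
      rw [hE]
      simp only [transpose_mul, transpose_transpose, Matrix.mul_add, Matrix.add_mul,
        Matrix.mul_assoc]
    rw [h, Matrix.add_apply, transpose_apply, two_mul]

theorem Ev.block₂₂ {R a b : Type*} [CommRing R] {D : Matrix (a ⊕ b) (a ⊕ b) R} (hD : Ev D) :
    Ev D.toBlocks₂₂ :=
  ⟨by ext i j; exact hD.1.apply (Sum.inr i) (Sum.inr j), fun i => hD.2 (Sum.inr i)⟩

theorem Ev.fromBlocks {R a b : Type*} [CommRing R] {A : Matrix a a R} {D : Matrix b b R}
    (hA : Ev A) (hD : Ev D) (c : Matrix a b R) : Ev (fromBlocks A c cᵀ D) := by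
  refine ⟨Matrix.IsSymm.fromBlocks hA.1 rfl hD.1, ?_⟩
  rintro (i | i)
  · exact hA.2 i
  · exact hD.2 i

variable {n m l : Type*}

theorem coe_two : ((2 : ℤ_[2]) : ℚ_[2]) = 2 := map_ofNat (PadicInt.Coe.ringHom (p := 2)) 2

theorem coe_four : ((4 : ℤ_[2]) : ℚ_[2]) = 4 := map_ofNat (PadicInt.Coe.ringHom (p := 2)) 4

theorem q_inj {A B : Matrix n m ℤ_[2]} (h : KM.q 2 A = KM.q 2 B) : A = B := by
  ext i j
  have := congrFun (congrFun h i) j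
  exact Subtype.ext this

theorem q_mul [Fintype m] (A : Matrix n m ℤ_[2]) (B : Matrix m l ℤ_[2]) :
    KM.q 2 (A * B) = KM.q 2 A * KM.q 2 B :=
  Matrix.map_mul (f := PadicInt.Coe.ringHom (p := 2))

theorem q_transpose (A : Matrix n m ℤ_[2]) : KM.q 2 Aᵀ = (KM.q 2 A)ᵀ := rfl

theorem q_det [Fintype n] [DecidableEq n] (A : Matrix n n ℤ_[2]) :
    (KM.q 2 A).det = (A.det : ℚ_[2]) :=
  ((PadicInt.Coe.ringHom (p := 2)).map_det A).symm

theorem q_det_ne [Fintype n] [DecidableEq n] {A : Matrix n n ℤ_[2]} (h : A.det ≠ 0) :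
    (KM.q 2 A).det ≠ 0 := by
  rw [q_det]; exact fun h' => h (Subtype.ext h')

variable [Fintype n] [DecidableEq n]

theorem conjInv_eq_iff {W : Matrix n n ℤ_[2]} (hW : W.det ≠ 0) (B X : Matrix n n ℚ_[2]) :
    KM.conjInv 2 B W = X ↔ B = (KM.q 2 W)ᵀ * X * KM.q 2 W := by
  have h1 : IsUnit (KM.q 2 W).det := (q_det_ne hW).isUnit
  have h2 : IsUnit ((KM.q 2 W)ᵀ).det := by rwa [det_transpose]
  unfold KM.conjInv
  rw [transpose_nonsing_inv]
  constructor
  · rintro rfl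
    simp only [Matrix.mul_assoc]
    rw [nonsing_inv_mul _ h1, Matrix.mul_one, ← Matrix.mul_assoc, mul_nonsing_inv _ h2,
      Matrix.one_mul]
  · rintro rfl
    simp only [Matrix.mul_assoc]
    rw [mul_nonsing_inv _ h1, Matrix.mul_one, ← Matrix.mul_assoc, nonsing_inv_mul _ h2,
      Matrix.one_mul]

/-- `V ∈ Ω̃^{(0)}(B)` expressed without inverses: `B = C[V]` for an even integral `C`. -/
theorem mem_OmT0 {B : Matrix n n ℤ_[2]} (hB : B.det ≠ 0) (V : Matrix n n ℤ_[2]) :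
    V ∈ KM.OmT0 2 (KM.q 2 B) ↔ V.det ≠ 0 ∧ ∃ C, Ev C ∧ B = Vᵀ * C * V := by
  constructor
  · rintro ⟨hV, hs, -, hx⟩
    choose x hx using hx
    refine ⟨hV, Matrix.of fun i j => (if i = j then 2 else 1) * x i j, ?_⟩
    have hC : KM.conjInv 2 (KM.q 2 B) V =
        KM.q 2 (Matrix.of fun i j => (if i = j then 2 else 1) * x i j) := by
      ext i j
      rw [hx]
      simp only [KM.q, map_apply, of_apply]
      split_ifs <;> simp [coe_two]
    refine ⟨⟨?_, fun i => ⟨x i i, by simp⟩⟩, ?_⟩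
    · rw [hC] at hs
      exact q_inj hs
    · apply q_inj
      rw [q_mul, q_mul, q_transpose]
      exact (conjInv_eq_iff hV _ _).1 hC
  · rintro ⟨hV, C, hC, hB'⟩
    have hc : KM.conjInv 2 (KM.q 2 B) V = KM.q 2 C := by
      rw [conjInv_eq_iff hV, hB', q_mul, q_mul, q_transpose]
    refine ⟨hV, ?_⟩
    rw [hc]
    refine ⟨?_, q_det_ne ?_, fun i j => ?_⟩
    · rw [Matrix.IsSymm, ← q_transpose, hC.1.eq]
    · rintro h0
      apply hB
      rw [hB', det_mul, det_mul, h0]; simp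
    · by_cases h : i = j
      · subst h
        obtain ⟨x, hx⟩ := hC.2 i
        exact ⟨x, by simp [KM.q, hx, coe_two]⟩
      · exact ⟨C i j, by simp [KM.q, h]⟩

/-- `W ∈ Ω̃^{(1)}(4B)` expressed without inverses: `4B = (2D - rᵀr)[W]` with `D` even, where `2D`
ranges over `4L`. The row vector `r` is encoded as a `1 × n` matrix. -/
theorem mem_OmT1 {B : Matrix n n ℤ_[2]} (hB : B.det ≠ 0) (W : Matrix n n ℤ_[2]) :
    W ∈ KM.OmT1 2 ((4 : ℚ_[2]) • KM.q 2 B) ↔ W.det ≠ 0 ∧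
      ∃ (r : Matrix (Fin 1) n ℤ_[2]) (D : Matrix n n ℤ_[2]), Ev D ∧
        (4 : ℤ_[2]) • B = Wᵀ * ((2 : ℤ_[2]) • D - rᵀ * r) * W := by
  have h4 : (4 : ℚ_[2]) • KM.q 2 B = KM.q 2 ((4 : ℤ_[2]) • B) := by
    ext i j; simp [KM.q, coe_four]
  have hrr : ∀ r : Matrix (Fin 1) n ℤ_[2], KM.outer 2 (r 0) = KM.q 2 (rᵀ * r) := by
    intro r; ext i j
    simp [KM.q, KM.outer, mul_apply]
  rw [h4]
  constructor
  · rintro ⟨hW, ⟨⟨hs, -⟩, r, hs', hx⟩, -⟩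
    choose x hx using hx
    set r' : Matrix (Fin 1) n ℤ_[2] := Matrix.of fun _ => r with hr'
    set D : Matrix n n ℤ_[2] := Matrix.of fun i j => (if i = j then 2 else 1) * x i j with hD
    have hC : KM.conjInv 2 (KM.q 2 ((4 : ℤ_[2]) • B)) W =
        KM.q 2 ((2 : ℤ_[2]) • D - r'ᵀ * r') := by
      ext i j
      have h1 := hx i j
      have h2 := congrFun (congrFun (hrr r') i) j
      have h3 : KM.q 2 ((2 : ℤ_[2]) • D - r'ᵀ * r') i j =
          2 * (D i j : ℚ_[2]) - KM.q 2 (r'ᵀ * r') i j := by simp [KM.q, coe_two]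
      have h4 : KM.outer 2 (r' 0) = KM.outer 2 r := rfl
      rw [h3, ← h2, h4]
      simp only [Matrix.smul_apply, Matrix.add_apply, smul_eq_mul] at h1
      rw [inv_mul_eq_iff_eq_mul₀ (by norm_num)] at h1
      rw [eq_sub_iff_add_eq, h1]
      simp only [hD, of_apply]
      split_ifs
      · simp only [PadicInt.coe_mul, coe_two]; ring
      · simp only [PadicInt.coe_mul, PadicInt.coe_one]; ring
    refine ⟨hW, r', D, ⟨?_, fun i => ⟨x i i, by simp [hD]⟩⟩, ?_⟩
    · rw [hC] at hs
      have h1 : ((2 : ℤ_[2]) • D - r'ᵀ * r')ᵀ = (2 : ℤ_[2]) • D - r'ᵀ * r' := q_inj hs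
      simp only [transpose_sub, transpose_smul, transpose_mul, transpose_transpose,
        sub_left_inj] at h1
      exact smul_right_injective _ two_prime.ne_zero h1
    · apply q_inj
      rw [q_mul, q_mul, q_transpose]
      exact (conjInv_eq_iff hW _ _).1 hC
  · rintro ⟨hW, r, D, hD, hB'⟩
    set A := (2 : ℤ_[2]) • D - rᵀ * r with hA
    have hAs : Aᵀ = A := by
      simp [hA, hD.1.eq]
    have hc : KM.conjInv 2 (KM.q 2 ((4 : ℤ_[2]) • B)) W = KM.q 2 A := by
      rw [conjInv_eq_iff hW, hB', q_mul, q_mul, q_transpose]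
    refine ⟨hW, ?_⟩
    rw [hc]
    have hDs : KM.q 2 A + KM.outer 2 (r 0) = (2 : ℚ_[2]) • KM.q 2 D := by
      rw [hrr]
      ext i j
      simp [KM.q, hA, coe_two]
    refine ⟨⟨⟨?_, fun i j => ?_⟩, r 0, ?_, fun i j => ?_⟩, q_det_ne ?_⟩
    · rw [Matrix.IsSymm, ← q_transpose, hAs]
    · by_cases h : i = j
      · exact ⟨A i j, by simp [KM.q, h]⟩
      · exact ⟨2 * A i j, by simp [KM.q, h, coe_two]⟩
    · rw [hDs, Matrix.IsSymm, transpose_smul, transpose_smul, ← q_transpose, hD.1.eq]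
    · rw [hDs]
      by_cases h : i = j
      · subst h
        obtain ⟨x, hx⟩ := hD.2 i
        refine ⟨x, ?_⟩
        simp only [KM.q, Matrix.smul_apply, map_apply, hx, smul_eq_mul, if_true]
        simp only [PadicInt.coe_mul, coe_two]; ring
      · refine ⟨D i j, ?_⟩
        simp only [KM.q, Matrix.smul_apply, map_apply, smul_eq_mul, h, if_false]
        ring
    · intro h0
      have h1 := congrArg det hB'
      rw [det_mul, det_mul, h0, det_smul] at h1
      simp [hB] at h1

end Bridge

/-! ### The correction row -/

section Core

variable {n : Type*} [Fintype n]

/-- `x` is an admissible corner row for `W`: `4B = (2D - rᵀr)[W]` with `D` even and `x = rW/2`.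
The bijection sends the class of such a `W` to that of `1 ⊥ [[1, x], [0, W]]`. -/
def Good (B W : Matrix n n ℤ_[2]) (x : Matrix (Fin 1) n ℤ_[2]) : Prop :=
  ∃ (r : Matrix (Fin 1) n ℤ_[2]) (D : Matrix n n ℤ_[2]), Ev D ∧
    (4 : ℤ_[2]) • B = Wᵀ * ((2 : ℤ_[2]) • D - rᵀ * r) * W ∧ r * W = (2 : ℤ_[2]) • x

/-- The row `rW` is divisible by `2`, because `(rW)ᵢ²` is the `i`-th diagonal entry of
`2D[W] - 4B`. -/
theorem exists_good {B W : Matrix n n ℤ_[2]} {r : Matrix (Fin 1) n ℤ_[2]} {D : Matrix n n ℤ_[2]}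
    (hD : Ev D) (h : (4 : ℤ_[2]) • B = Wᵀ * ((2 : ℤ_[2]) • D - rᵀ * r) * W) :
    ∃ x, Good B W x := by
  have hexp : (r * W)ᵀ * (r * W) = (2 : ℤ_[2]) • (Wᵀ * D * W) - (4 : ℤ_[2]) • B := by
    rw [h]
    simp only [transpose_mul, Matrix.mul_sub, Matrix.sub_mul, Matrix.mul_assoc, Matrix.mul_smul,
      Matrix.smul_mul]
    abel
  have hev : ∀ i, (2 : ℤ_[2]) ∣ (r * W) 0 i := by
    intro i
    have h1 := congrFun (congrFun hexp i) i
    rw [mul_apply] at h1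
    simp only [Fin.sum_univ_one, transpose_apply, Matrix.sub_apply, Matrix.smul_apply,
      smul_eq_mul] at h1
    have h2 : (2 : ℤ_[2]) ∣ (r * W) 0 i * (r * W) 0 i :=
      ⟨(Wᵀ * D * W) i i - 2 * B i i, by linear_combination h1⟩
    exact (two_prime.dvd_or_dvd h2).elim id id
  choose x hx using hev
  refine ⟨Matrix.of fun _ => x, r, D, hD, h, ?_⟩
  ext i j
  fin_cases i
  simpa using hx j

/-- The corner row is determined by the left coset of `W` up to integral combinations of the rows
of `W`: the vector `r` is determined modulo `2`, as `rᵢ² ≡ (r'U)ᵢ²` modulo `2`. -/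
theorem Good.unique [DecidableEq n] {B W U : Matrix n n ℤ_[2]} {x y : Matrix (Fin 1) n ℤ_[2]} (hW : W.det ≠ 0)
    (hx : Good B W x) (hy : Good B (U * W) y) : ∃ t : Matrix (Fin 1) n ℤ_[2], y = x + t * W := by
  obtain ⟨r, D, -, h1, hr⟩ := hx
  obtain ⟨r', D', -, h2, hr'⟩ := hy
  have hcancel : Uᵀ * ((2 : ℤ_[2]) • D' - r'ᵀ * r') * U = (2 : ℤ_[2]) • D - rᵀ * r := by
    have h3 : Wᵀ * (Uᵀ * ((2 : ℤ_[2]) • D' - r'ᵀ * r') * U) * W =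
        Wᵀ * ((2 : ℤ_[2]) • D - rᵀ * r) * W := by
      rw [← h1, h2]
      simp only [transpose_mul, Matrix.mul_assoc]
    have hl : Function.Injective fun X : Matrix n n ℤ_[2] => X * W := by
      intro X Y hXY
      have h4 : X * W * W.adjugate = Y * W * W.adjugate := congrArg (· * W.adjugate) hXY
      simp only [Matrix.mul_assoc, mul_adjugate, Matrix.mul_smul, Matrix.mul_one] at h4
      exact smul_right_injective _ hW h4
    have h5 := hl h3
    have h6 := congrArg transpose h5
    rw [transpose_mul, transpose_mul Wᵀ, transpose_transpose] at h6
    exact transpose_injective (hl h6)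
  have hexp : (r' * U)ᵀ * (r' * U) - rᵀ * r =
      (2 : ℤ_[2]) • (Uᵀ * D' * U - D) := by
    have h3 : Uᵀ * ((2 : ℤ_[2]) • D' - r'ᵀ * r') * U =
        (2 : ℤ_[2]) • (Uᵀ * D' * U) - (r' * U)ᵀ * (r' * U) := by
      simp only [transpose_mul, Matrix.mul_sub, Matrix.sub_mul, Matrix.mul_assoc, Matrix.mul_smul,
        Matrix.smul_mul]
    rw [h3] at hcancel
    rw [smul_sub, sub_eq_iff_eq_add.1 hcancel]
    abel
  have hev : ∀ i, (2 : ℤ_[2]) ∣ (r' * U) 0 i - r 0 i := by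
    intro i
    have h1 := congrFun (congrFun hexp i) i
    simp only [Matrix.sub_apply, Matrix.smul_apply, smul_eq_mul] at h1
    rw [mul_apply, mul_apply] at h1
    simp only [Fin.sum_univ_one, transpose_apply] at h1
    have h2 : (2 : ℤ_[2]) ∣ ((r' * U) 0 i - r 0 i) * ((r' * U) 0 i - r 0 i) :=
      ⟨(Uᵀ * D' * U) i i - D i i - r 0 i * ((r' * U) 0 i - r 0 i), by linear_combination h1⟩
    exact (two_prime.dvd_or_dvd h2).elim id id
  choose t ht using hev
  refine ⟨Matrix.of fun _ => t, smul_right_injective _ two_prime.ne_zero ?_⟩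
  have h7 : r' * U = r + (2 : ℤ_[2]) • Matrix.of fun _ => t := by
    ext i j
    fin_cases i
    simpa [sub_eq_iff_eq_add'] using ht j
  change (2 : ℤ_[2]) • y = (2 : ℤ_[2]) • (x + _)
  rw [← hr', ← Matrix.mul_assoc, h7, Matrix.add_mul, hr, smul_add, Matrix.smul_mul]

/-- `(2) ⊥ 2B = C[[[1, x], [0, W]]]` with the even matrix `C = [[2, -r], [-rᵀ, D]]`. -/
theorem Good.form {B W : Matrix n n ℤ_[2]} {x : Matrix (Fin 1) n ℤ_[2]} (hx : Good B W x) :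
    ∃ C, Ev C ∧ fromBlocks (Matrix.of fun (_ _ : Fin 1) => (2 : ℤ_[2])) 0 0 ((2 : ℤ_[2]) • B) =
      (fromBlocks 1 x 0 W)ᵀ * C * fromBlocks 1 x 0 W := by
  obtain ⟨r, D, hD, h, hr⟩ := hx
  have h2 : (Matrix.of fun (_ _ : Fin 1) => (2 : ℤ_[2])) = (2 : ℤ_[2]) • 1 := by
    ext i j; simp [Subsingleton.elim i j]
  refine ⟨fromBlocks (Matrix.of fun (_ _ : Fin 1) => (2 : ℤ_[2])) (-r) (-r)ᵀ D,
    Ev.fromBlocks ⟨by ext; rfl, fun _ => by simp⟩ hD _, ?_⟩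
  rw [h2]
  have hrT : Wᵀ * rᵀ = (2 : ℤ_[2]) • xᵀ := by rw [← transpose_mul, hr, transpose_smul]
  have hB : (2 : ℤ_[2]) • B = Wᵀ * D * W - (2 : ℤ_[2]) • (xᵀ * x) := by
    apply smul_right_injective _ (two_prime.ne_zero)
    change (2 : ℤ_[2]) • (2 : ℤ_[2]) • B = (2 : ℤ_[2]) • _
    rw [smul_smul, show (2 : ℤ_[2]) * 2 = 4 by norm_num, h, Matrix.mul_sub, Matrix.sub_mul,
      ← Matrix.mul_assoc Wᵀ rᵀ, hrT, Matrix.mul_assoc _ r, hr]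
    simp only [Matrix.mul_smul, Matrix.smul_mul, smul_sub]
  rw [fromBlocks_transpose, fromBlocks_multiply, fromBlocks_multiply, fromBlocks_inj]
  simp only [transpose_one, transpose_zero, transpose_neg, Matrix.one_mul, Matrix.zero_mul,
    Matrix.mul_one, Matrix.mul_zero, add_zero, Matrix.mul_neg, Matrix.neg_mul, Matrix.add_mul,
    Matrix.smul_mul, Matrix.mul_smul, hr, hrT]
  refine ⟨by simp, by abel, by abel, ?_⟩
  rw [hB, Matrix.mul_assoc xᵀ r, hr, Matrix.mul_smul]
  abel

/-! ### Normal forms of the elements of `Ω̃^{(0)}` -/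

/-- An integral matrix `V` with `Θ ⊥ B = C[V]`, `Θ` unimodular, is left equivalent to `1 ⊥ S`.
If `Z` is the block of columns of `V` belonging to `Θ`, the rows `Θ⁻¹ Zᵀ C` are a left inverse of
`Z` and vanish on the other columns of `V`, which are orthogonal to `Z`. -/
theorem exists_unimodular_split {a b : Type*} [Fintype a] [DecidableEq a] [Fintype b]
    [DecidableEq b] {Θ : Matrix a a ℤ_[2]} (hΘ : IsUnit Θ.det) {B : Matrix b b ℤ_[2]}
    {V C : Matrix (a ⊕ b) (a ⊕ b) ℤ_[2]} (hC : Ev C) (h : fromBlocks Θ 0 0 B = Vᵀ * C * V) :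
    ∃ (U : Matrix (a ⊕ b) (a ⊕ b) ℤ_[2]) (S C' : Matrix b b ℤ_[2]), IsUnit U.det ∧ Ev C' ∧
      U * V = fromBlocks 1 0 0 S ∧ B = Sᵀ * C' * S := by
  set Z := V.toCols₁
  set Y := V.toCols₂
  have hV : V = fromCols Z Y := (fromCols_toCols V).symm
  have h' := h
  rw [hV, transpose_fromCols, fromRows_mul, fromRows_mul_fromCols, fromBlocks_inj] at h'
  obtain ⟨hZZ, hZY, -, -⟩ := h'
  obtain ⟨N, hU, hNZ⟩ := exists_completion (Θ⁻¹ * Zᵀ * C) Z (by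
    rw [Matrix.mul_assoc, Matrix.mul_assoc, ← Matrix.mul_assoc Zᵀ, ← hZZ, nonsing_inv_mul _ hΘ])
  set U := fromRows (Θ⁻¹ * Zᵀ * C) N
  have hUV : U * V = fromBlocks 1 0 0 (N * Y) := by
    rw [hV, fromRows_mul_fromCols, hNZ]
    congr 1
    · rw [Matrix.mul_assoc, Matrix.mul_assoc, ← Matrix.mul_assoc Zᵀ, ← hZZ, nonsing_inv_mul _ hΘ]
    · rw [Matrix.mul_assoc, Matrix.mul_assoc, ← Matrix.mul_assoc Zᵀ, ← hZY, Matrix.mul_zero]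
  refine ⟨U, N * Y, (U⁻¹ᵀ * C * U⁻¹).toBlocks₂₂, hU, (hC.congr _).block₂₂, hUV, ?_⟩
  have h3 : fromBlocks Θ 0 0 B = (U * V)ᵀ * (U⁻¹ᵀ * C * U⁻¹) * (U * V) := by
    have e1 : U⁻¹ * (U * V) = V := by rw [← Matrix.mul_assoc, nonsing_inv_mul _ hU, Matrix.one_mul]
    calc _ = (U⁻¹ * (U * V))ᵀ * C * (U⁻¹ * (U * V)) := by rw [e1, h]
      _ = _ := by rw [transpose_mul]; simp only [Matrix.mul_assoc]
  rw [hUV, ← fromBlocks_toBlocks (U⁻¹ᵀ * C * U⁻¹), fromBlocks_transpose, fromBlocks_multiply,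
    fromBlocks_multiply, fromBlocks_inj] at h3
  simpa using h3.2.2.2

/-- An integral matrix `V` with `(2) ⊥ 2B = C[V]`, `C` even, is left equivalent to
`[[1, x], [0, W]]` with `x` admissible for `W`. The first column of `V` is primitive: if it were
`2y`, then `2 = 4 C[y]` would be divisible by `8`. -/
theorem exists_two_split [DecidableEq n] {B : Matrix n n ℤ_[2]} {V C : Matrix (Fin 1 ⊕ n) (Fin 1 ⊕ n) ℤ_[2]}
    (hC : Ev C)
    (h : fromBlocks (Matrix.of fun (_ _ : Fin 1) => (2 : ℤ_[2])) 0 0 ((2 : ℤ_[2]) • B) =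
      Vᵀ * C * V) :
    ∃ (U : Matrix (Fin 1 ⊕ n) (Fin 1 ⊕ n) ℤ_[2]) (W : Matrix n n ℤ_[2])
      (x : Matrix (Fin 1) n ℤ_[2]), IsUnit U.det ∧ U * V = fromBlocks 1 x 0 W ∧ Good B W x := by
  set Z := V.toCols₁
  set Y := V.toCols₂
  have hV : V = fromCols Z Y := (fromCols_toCols V).symm
  have h' := h
  rw [hV, transpose_fromCols, fromRows_mul, fromRows_mul_fromCols, fromBlocks_inj] at h'
  have hZZ := h'.1
  have hprim : ∃ k, IsUnit (Z k 0) := by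
    by_contra! hcon
    have hdvd : ∀ k, (2 : ℤ_[2]) ∣ Z k 0 := fun k => by
      have := (PadicInt.norm_lt_one_iff_dvd (p := 2) _).1 (PadicInt.not_isUnit_iff.1 (hcon k))
      simpa using this
    choose y hy using hdvd
    have hZ : Z = (2 : ℤ_[2]) • Matrix.of fun k (_ : Fin 1) => y k := by
      ext i j
      fin_cases j
      simpa using hy i
    obtain ⟨c, hc⟩ := (hC.congr (Matrix.of fun k (_ : Fin 1) => y k)).2 0
    rw [hZ] at hZZ
    have h1 := congrFun (congrFun hZZ 0) 0
    simp only [transpose_smul, Matrix.smul_mul, Matrix.mul_smul, Matrix.smul_apply, of_apply,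
      smul_eq_mul] at h1
    rw [hc] at h1
    have h2 : (2 : ℤ_[2]) * (2 * (2 * c)) = 2 * 1 := by linear_combination -h1
    have h3 := mul_left_cancel₀ two_prime.ne_zero h2
    exact two_prime.not_isUnit (IsUnit.of_mul_eq_one _ h3)
  obtain ⟨k, u, hu⟩ := hprim
  obtain ⟨N, hU, hNZ⟩ := exists_completion
    (Matrix.of fun (_ : Fin 1) j => if j = k then (↑u⁻¹ : ℤ_[2]) else 0) Z (by
      ext i j
      fin_cases i; fin_cases j
      simp [mul_apply, ← hu])
  set T : Matrix (Fin 1) (Fin 1 ⊕ n) ℤ_[2] :=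
    Matrix.of fun (_ : Fin 1) j => if j = k then (↑u⁻¹ : ℤ_[2]) else 0
  have hTZ : T * Z = 1 := by
    ext i j
    fin_cases i; fin_cases j
    simp [T, mul_apply, ← hu]
  set U := fromRows T N
  have hUV : U * V = fromBlocks 1 (T * Y) 0 (N * Y) := by
    rw [hV, fromRows_mul_fromCols, hNZ, hTZ]
  refine ⟨U, N * Y, T * Y, hU, hUV, ?_⟩
  set x := T * Y
  set W := N * Y
  set C' := U⁻¹ᵀ * C * U⁻¹
  have hC' : Ev C' := hC.congr _
  have h3 : fromBlocks (Matrix.of fun (_ _ : Fin 1) => (2 : ℤ_[2])) 0 0 ((2 : ℤ_[2]) • B) =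
      (U * V)ᵀ * C' * (U * V) := by
    have e1 : U⁻¹ * (U * V) = V := by rw [← Matrix.mul_assoc, nonsing_inv_mul _ hU, Matrix.one_mul]
    calc _ = (U⁻¹ * (U * V))ᵀ * C * (U⁻¹ * (U * V)) := by rw [e1, h]
      _ = _ := by rw [transpose_mul]; simp only [C', Matrix.mul_assoc]
  have h2 : (Matrix.of fun (_ _ : Fin 1) => (2 : ℤ_[2])) = (2 : ℤ_[2]) • 1 := by
    ext i j; simp [Subsingleton.elim i j]
  have hsym : C'.toBlocks₂₁ = C'.toBlocks₁₂ᵀ := by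
    ext i j; exact hC'.1.apply (Sum.inl j) (Sum.inr i)
  rw [hUV, ← fromBlocks_toBlocks C', fromBlocks_transpose, fromBlocks_multiply,
    fromBlocks_multiply, fromBlocks_inj, h2, hsym] at h3
  simp only [transpose_one, transpose_zero, Matrix.one_mul, Matrix.zero_mul,
    Matrix.mul_one, Matrix.mul_zero, add_zero] at h3
  obtain ⟨h11, h12, -, h22⟩ := h3
  rw [← h11] at h12 h22
  have hr : C'.toBlocks₁₂ * W = -((2 : ℤ_[2]) • x) := by
    rw [Matrix.smul_mul, Matrix.one_mul] at h12
    exact (neg_eq_of_add_eq_zero_right h12.symm).symm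
  have hrT : Wᵀ * C'.toBlocks₁₂ᵀ = -((2 : ℤ_[2]) • xᵀ) := by
    rw [← transpose_mul, hr, transpose_neg, transpose_smul]
  refine ⟨-C'.toBlocks₁₂, C'.toBlocks₂₂, hC'.block₂₂, ?_, by rw [Matrix.neg_mul, hr, neg_neg]⟩
  have h4 : (4 : ℤ_[2]) • B = (2 : ℤ_[2]) • (2 : ℤ_[2]) • B := by
    rw [smul_smul]; norm_num
  rw [h4, h22]
  simp only [Matrix.mul_sub, Matrix.sub_mul, Matrix.add_mul, transpose_neg, Matrix.neg_mul,
    Matrix.mul_neg, neg_neg]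
  rw [← Matrix.mul_assoc Wᵀ C'.toBlocks₁₂ᵀ, hrT, Matrix.mul_assoc _ C'.toBlocks₁₂ W,
    Matrix.mul_assoc _ C'.toBlocks₁₂ W, hr]
  simp only [Matrix.mul_smul, Matrix.smul_mul, Matrix.mul_neg, Matrix.neg_mul, Matrix.mul_one,
    neg_neg, smul_add, smul_neg, smul_smul]
  module

/-! ### Comparison of left cosets -/

theorem sameLeft_of_block {a b : Type*} [Fintype a] [DecidableEq a] [Fintype b] [DecidableEq b]
    {Q Q' : Matrix a b ℤ_[2]} {S S' : Matrix b b ℤ_[2]}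
    (h : KM.SameLeft 2 (fromBlocks (1 : Matrix a a ℤ_[2]) Q 0 S) (fromBlocks 1 Q' 0 S')) :
    KM.SameLeft 2 S S' := by
  obtain ⟨U, hU, h⟩ := h
  rw [← fromBlocks_toBlocks U, fromBlocks_multiply, fromBlocks_inj] at h
  simp only [Matrix.mul_one, Matrix.mul_zero, add_zero] at h
  obtain ⟨h1, -, h3, h4⟩ := h
  rw [← h3, Matrix.zero_mul, zero_add] at h4
  refine ⟨U.toBlocks₂₂, ?_, h4⟩
  rw [← fromBlocks_toBlocks U, ← h1, ← h3, det_fromBlocks_zero₂₁, det_one, one_mul] at hU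
  exact hU

end Core

end KMProof

/-- there exists a bijection
`GL\Ω̃^{(1)}(4B₁) ≃ GL\Ω̃^{(0)}(Θ ⊥ (2) ⊥ 2B₁)` compatible with `D_{·,i}`. -/
theorem statement9 (n₀ s : ℕ) (hn₀ : Even n₀) (hme : Even (n₀ + 1 + s)) (hs : 1 ≤ s)
    (Θ : Matrix (Fin n₀) (Fin n₀) ℤ_[2]) (hΘs : Θ.IsSymm) (hΘu : IsUnit Θ.det)
    (hΘe : ∀ i, ∃ x : ℤ_[2], Θ i i = 2 * x)
    (B₁ : Matrix (Fin s) (Fin s) ℤ_[2]) (hB₁s : B₁.IsSymm) (hB₁d : B₁.det ≠ 0) :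
    ∃ φ : Matrix (Fin s) (Fin s) ℤ_[2] →
        Matrix (Fin n₀ ⊕ (Fin 1 ⊕ Fin s)) (Fin n₀ ⊕ (Fin 1 ⊕ Fin s)) ℤ_[2],
      KM.InducesLeftBij 2 φ (KM.OmT1 2 ((4 : ℚ_[2]) • KM.q 2 B₁))
        (KM.OmT0 2 (Matrix.fromBlocks (KM.q 2 Θ) 0 0
          (Matrix.fromBlocks (Matrix.of fun (_ : Fin 1) (_ : Fin 1) => (2 : ℚ_[2])) 0 0
            ((2 : ℚ_[2]) • KM.q 2 B₁)))) ∧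
      ∀ i : ℕ, ∀ W ∈ KM.OmT1 2 ((4 : ℚ_[2]) • KM.q 2 B₁),
        (W ∈ KM.Dset 2 i ↔ φ W ∈ KM.Dset 2 i) := by
  let B := fromBlocks Θ 0 0
    (fromBlocks (Matrix.of fun (_ _ : Fin 1) => (2 : ℤ_[2])) 0 0 ((2 : ℤ_[2]) • B₁))
  have hq : (Matrix.fromBlocks (KM.q 2 Θ) 0 0
      (Matrix.fromBlocks (Matrix.of fun (_ : Fin 1) (_ : Fin 1) => (2 : ℚ_[2])) 0 0
        ((2 : ℚ_[2]) • KM.q 2 B₁))) = KM.q 2 B := by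
    ext (i | i | i) (j | j | j) <;> simp [KM.q, B, KMProof.coe_two]
  have hBd : B.det ≠ 0 := by
    simp [B, det_fromBlocks_zero₂₁, hΘu.ne_zero, hB₁d]
  have hΘ : KMProof.Ev Θ := ⟨hΘs, hΘe⟩
  let ψ : Matrix (Fin s) (Fin s) ℤ_[2] → Matrix (Fin 1) (Fin s) ℤ_[2] →
      Matrix (Fin n₀ ⊕ (Fin 1 ⊕ Fin s)) (Fin n₀ ⊕ (Fin 1 ⊕ Fin s)) ℤ_[2] :=
    fun W x => fromBlocks 1 0 0 (fromBlocks 1 x 0 W)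
  -- `ξ W` is a chosen admissible corner row for `W`.
  let ξ : Matrix (Fin s) (Fin s) ℤ_[2] → Matrix (Fin 1) (Fin s) ℤ_[2] :=
    fun W => Classical.epsilon fun x => KMProof.Good B₁ W x
  have hξ : ∀ W ∈ KM.OmT1 2 ((4 : ℚ_[2]) • KM.q 2 B₁), KMProof.Good B₁ W (ξ W) := by
    intro W hW
    obtain ⟨-, r, D, hD, h⟩ := (KMProof.mem_OmT1 hB₁d W).1 hW
    exact Classical.epsilon_spec (KMProof.exists_good hD h)
  have hψ : ∀ W₁ U x t, ψ (U * W₁) (x + t * W₁) =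
      fromBlocks 1 0 0 (fromBlocks 1 t 0 U) * ψ W₁ x := by
    intro W₁ U x t
    simp [ψ, fromBlocks_multiply]
  have hdet : ∀ W : Matrix (Fin s) (Fin s) ℤ_[2],
      W ∈ KM.OmT1 2 ((4 : ℚ_[2]) • KM.q 2 B₁) → W.det ≠ 0 := fun W hW => hW.1
  rw [hq]
  refine ⟨fun W => ψ W (ξ W), ⟨?_, ?_, ?_⟩, ?_⟩
  · intro W hW
    obtain ⟨C, hC, hB⟩ := (hξ W hW).form
    refine (KMProof.mem_OmT0 hBd _).2 ⟨by simpa [ψ] using hdet W hW, fromBlocks Θ 0 0ᵀ C,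
      hΘ.fromBlocks hC 0, ?_⟩
    simp [ψ, B, hB, fromBlocks_transpose, fromBlocks_multiply]
  · intro W₁ h₁ W₂ h₂
    constructor
    · rintro ⟨U, hU, rfl⟩
      obtain ⟨t, ht⟩ := (hξ _ h₁).unique (hdet _ h₁) (hξ _ h₂)
      refine ⟨fromBlocks 1 0 0 (fromBlocks 1 t 0 U), by simpa using hU, ?_⟩
      simp only [ht, hψ]
    · intro h
      exact KMProof.sameLeft_of_block (KMProof.sameLeft_of_block h)
  · intro V hV
    obtain ⟨hVd, C, hC, hB⟩ := (KMProof.mem_OmT0 hBd V).1 hV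
    obtain ⟨U, S, C', hU, hC', hUV, hS⟩ := KMProof.exists_unimodular_split hΘu hC hB
    obtain ⟨U', W, x, hU', hUS, hx⟩ := KMProof.exists_two_split hC' hS
    have htot : (fromBlocks 1 0 0 U' * U) * V = ψ W x := by
      rw [Matrix.mul_assoc, hUV, fromBlocks_multiply]
      simp [ψ, hUS]
    have hUt : IsUnit (fromBlocks (1 : Matrix (Fin n₀) (Fin n₀) ℤ_[2]) 0 0 U' * U).det := by
      rw [det_mul]
      exact IsUnit.mul (by simpa using hU') hU
    have hWd : W.det ≠ 0 := by
      have h1 := congrArg det htot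
      rw [det_mul] at h1
      have h2 : (ψ W x).det = W.det := by simp [ψ]
      rw [← h2, ← h1]
      exact mul_ne_zero hUt.ne_zero hVd
    have hW : W ∈ KM.OmT1 2 ((4 : ℚ_[2]) • KM.q 2 B₁) := by
      obtain ⟨r, D, hD, h, -⟩ := hx
      exact (KMProof.mem_OmT1 hB₁d W).2 ⟨hWd, r, D, hD, h⟩
    refine ⟨W, hW, ?_⟩
    obtain ⟨t, ht⟩ := (hξ W hW).unique (U := 1) hWd (by rwa [Matrix.one_mul])
    set Ut := fromBlocks (1 : Matrix (Fin n₀) (Fin n₀) ℤ_[2]) 0 0 U' * U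
    refine ⟨Ut⁻¹ * fromBlocks 1 0 0 (fromBlocks 1 t 0 1), ?_, ?_⟩
    · rw [det_mul]
      exact IsUnit.mul (isUnit_nonsing_inv_det _ hUt) (by simp)
    · rw [Matrix.mul_assoc, ← hψ, ← ht, Matrix.one_mul, ← htot, ← Matrix.mul_assoc,
        nonsing_inv_mul _ hUt, Matrix.one_mul]
  · intro i W hW
    have hWd := hdet W hW
    rw [KMProof.Dset_block_iff W hWd (ξ W) i,
      KMProof.Dset_block_iff (fromBlocks 1 (ξ W) 0 W) (by simpa using hWd)
        (0 : Matrix (Fin n₀) _ ℤ_[2]) i]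
end
end

section
/- Let p be a prime, let m be a positive even integer, let B ∈ L^{(1)}_{m-1,p}, and let B^{(1)} = [[1, r/2],[rᵀ/2,(B + rᵀr)/4]] for some row vector r ∈ ℤ_p^{m-1} with B + rᵀr ∈ 4L_{m-1,p}. Then there exists a bijection ψ from GL_{m-1}(ℤ_p)\Ω̃^{(1)}(B) onto GL_m(ℤ_p)\Ω̃^{(0)}(2^{δ_{2,p}}B^{(1)}) (where δ_{2,p} = 1 if p = 2 and 0 otherwise) such that ν_p(det W') = ν_p(det W) whenever ψ sends the class of W to the class of W'; moreover, for each 0 ≤ i ≤ m-1, ψ maps the orbits contained in D_{m-1,i} onto the orbits contained in D_{m,i}. -/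
/-!
Completing the square writes `B^{(1)}` as the form `(x + r·y/2)² + B[y]/4`. Hence the substitution
`V = [[1, s], [0, W]]` carries the lift of `(B', r')` to the lift of `(B'[W], 2s + r'W)`
(`KM.Aone_conj`), and the lift of `(A, r)` is half-integral exactly when `A + rᵀr ∈ 4L`. For every
`p`, membership of `2^{δ_{2,p}} C` in `L^{(0)}` means that `C` is half-integral and nondegenerate
(`KM.inL0_iff`).

For `W ∈ Ω̃^{(1)}(B)` put `B' = B[W⁻¹]` and choose `r'` with `B' + r'ᵀr' ∈ 4L`. Both `r` and `r'W`
satisfy the congruence for `B`, and such a vector is determined modulo `2` by its diagonal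
congruences `r_i² ≡ -B_ii mod 4` (`KM.exists_eq_two_smul_add`), so `s = (r - r'W)/2` is integral
and `φ(W) = [[1, s], [0, W]]` lies in `Ω̃^{(0)}(2^{δ} B^{(1)})`. The same uniqueness modulo `2` shows
that the left class of `φ(W)` depends only on that of `W`, and the converse is read off from blocks.

For surjectivity, let `C = B^{(1)}[V⁻¹]`. The form `C` is half-integral and takes the value `1` at
the first column of `V`, so that column is primitive and can be moved to the first basis vector by
`GL_m(ℤ_p)`. Then `V = [[1, s], [0, W]]`, and `C` is the lift of `B[W⁻¹]`
(`KM.exists_sameLeft_blk`).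

Clearly `det φ(W) = det W`. By Smith normal form, `D_{n,i}` is the set of nonsingular matrices which
divide `p` and whose determinant has valuation `i` (`KM.mem_Dset_iff`); both conditions agree for
`W` and `φ(W)`.
-/

open Matrix Filter

open scoped Classical

noncomputable section

namespace KM

variable {p : ℕ} [Fact p.Prime]

/-! ### Entrywise coercion and half-integral matrices -/

section Basics

variable {n l k : Type*}

lemma q_apply (A : Matrix n l ℤ_[p]) (i : n) (j : l) : q p A i j = (A i j : ℚ_[p]) := rfl

lemma q_mul [Fintype l] (A : Matrix n l ℤ_[p]) (B : Matrix l k ℤ_[p]) :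
    q p (A * B) = q p A * q p B :=
  Matrix.map_mul (f := (PadicInt.Coe.ringHom : ℤ_[p] →+* ℚ_[p]))

lemma q_transpose (A : Matrix n l ℤ_[p]) : q p Aᵀ = (q p A)ᵀ := rfl

lemma four_ne_zero_padic : (4 : ℚ_[p]) ≠ 0 := by
  norm_num

lemma coe_two : ((2 : ℤ_[p]) : ℚ_[p]) = 2 :=
  map_ofNat (PadicInt.Coe.ringHom : ℤ_[p] →+* ℚ_[p]) 2

lemma isUnit_two (hp : p ≠ 2) : IsUnit (2 : ℤ_[p]) := by
  rw [PadicInt.isUnit_iff]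
  have := (PadicInt.norm_natCast_eq_one_iff (p := p) (n := 2)).2
    ((Nat.coprime_primes Fact.out Nat.prime_two).2 hp)
  simpa using this

variable [Fintype n] [DecidableEq n]

lemma det_q (A : Matrix n n ℤ_[p]) : (q p A).det = (A.det : ℚ_[p]) :=
  (RingHom.map_det (PadicInt.Coe.ringHom : ℤ_[p] →+* ℚ_[p]) A).symm

lemma isUnit_det_q {A : Matrix n n ℤ_[p]} (h : A.det ≠ 0) : IsUnit (q p A).det := by
  rw [det_q, isUnit_iff_ne_zero]
  simpa using h

lemma conjInv_smul (c : ℚ_[p]) (A : Matrix n n ℚ_[p]) (W : Matrix n n ℤ_[p]) :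
    conjInv p (c • A) W = c • conjInv p A W := by
  simp [conjInv]

/-- `conjInv p A W` is the unique `C` with `C[W] = A`. -/
lemma conjInv_eq_iff {A C : Matrix n n ℚ_[p]} {W : Matrix n n ℤ_[p]} (h : W.det ≠ 0) :
    conjInv p A W = C ↔ A = (q p W)ᵀ * C * q p W := by
  have hu := isUnit_det_q h
  have hut : IsUnit ((q p W)ᵀ).det := by rwa [Matrix.det_transpose]
  constructor
  · rintro rfl
    rw [conjInv, Matrix.transpose_nonsing_inv]
    simp only [Matrix.mul_assoc, Matrix.nonsing_inv_mul _ hu, Matrix.mul_one]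
    rw [Matrix.mul_nonsing_inv_cancel_left _ _ hut]
  · rintro rfl
    rw [conjInv, Matrix.transpose_nonsing_inv]
    simp only [Matrix.mul_assoc, Matrix.mul_nonsing_inv _ hu, Matrix.mul_one]
    rw [Matrix.nonsing_inv_mul_cancel_left _ _ hut]

lemma det_conjInv_ne_zero {A : Matrix n n ℚ_[p]} {W : Matrix n n ℤ_[p]} (h : W.det ≠ 0)
    (hA : A.det ≠ 0) : (conjInv p A W).det ≠ 0 := by
  have := (conjInv_eq_iff (A := A) h).1 rfl
  intro h0
  apply hA
  rw [this, Matrix.det_mul, Matrix.det_mul, h0]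
  simp

/-- Half-integral matrices are exactly the symmetrizations `(X + Xᵀ) / 2` of integral ones. -/
lemma isHalfIntegral_iff (A : Matrix n n ℚ_[p]) :
    IsHalfIntegral p A ↔ ∃ X : Matrix n n ℤ_[p], A = (2 : ℚ_[p])⁻¹ • (q p X + (q p X)ᵀ) := by
  constructor
  · rintro ⟨hs, h⟩
    choose x hx using h
    let e := Fintype.equivFin n
    -- the upper triangular half, for an arbitrary enumeration of the index type
    refine ⟨Matrix.of fun i j => if i = j then x i i else if e i < e j then x i j else 0, ?_⟩
    ext i j
    have hij := hs.apply i j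
    simp only [Matrix.smul_apply, Matrix.add_apply, Matrix.transpose_apply, q_apply,
      Matrix.of_apply, smul_eq_mul]
    rcases eq_or_ne i j with rfl | hne
    · rw [hx]; simp; ring
    · rcases lt_or_gt_of_ne (fun h => hne (e.injective h)) with hlt | hlt
      · rw [hx]; simp [hne, hne.symm, hlt, hlt.not_gt]
      · rw [← hij, hx]; simp [hne, hne.symm, hlt, hlt.not_gt]
  · rintro ⟨X, rfl⟩
    refine ⟨?_, fun i j => ?_⟩
    · rw [Matrix.IsSymm, Matrix.transpose_smul, Matrix.transpose_add, Matrix.transpose_transpose,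
        add_comm]
    · rcases eq_or_ne i j with rfl | hne
      · exact ⟨X i i, by simp [q_apply]; ring⟩
      · exact ⟨X i j + X j i, by simp [q_apply, hne]⟩

lemma IsHalfIntegral.conj [Fintype l] [DecidableEq l] {A : Matrix n n ℚ_[p]}
    (h : IsHalfIntegral p A) (W : Matrix n l ℤ_[p]) :
    IsHalfIntegral p ((q p W)ᵀ * A * q p W) := by
  obtain ⟨X, rfl⟩ := (isHalfIntegral_iff A).1 h
  refine (isHalfIntegral_iff _).2 ⟨Wᵀ * X * W, ?_⟩
  simp only [q_mul, q_transpose, Matrix.transpose_mul, Matrix.transpose_transpose, Matrix.mul_smul,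
    Matrix.smul_mul, Matrix.mul_add, Matrix.add_mul, Matrix.mul_assoc]

/-- For every `p`, the scaling by `2^{δ_{2,p}}` turns half-integrality into membership in
`L^{(0)}`: for odd `p` both conditions reduce to integrality, since `2` is a unit. -/
lemma inL0_iff (A : Matrix n n ℚ_[p]) :
    InL0 p (((2 : ℚ_[p]) ^ (if p = 2 then 1 else 0)) • A) ↔ IsHalfIntegral p A ∧ A.det ≠ 0 := by
  have h2 : (2 : ℚ_[p]) ≠ 0 := two_ne_zero
  have hc : ((2 : ℚ_[p]) ^ (if p = 2 then 1 else 0)) ≠ 0 := pow_ne_zero _ h2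
  have hsymm : (((2 : ℚ_[p]) ^ (if p = 2 then 1 else 0)) • A).IsSymm ↔ A.IsSymm := by
    rw [Matrix.IsSymm, Matrix.transpose_smul]
    exact ⟨fun h => smul_right_injective _ hc h, fun h => by rw [h.eq]⟩
  have hdet : (((2 : ℚ_[p]) ^ (if p = 2 then 1 else 0)) • A).det ≠ 0 ↔ A.det ≠ 0 := by
    rw [Matrix.det_smul, mul_ne_zero_iff]
    exact ⟨fun h => h.2, fun h => ⟨pow_ne_zero _ hc, h⟩⟩
  rw [InL0, IsHalfIntegral, hsymm, hdet]
  suffices h : ∀ i j, (∃ x : ℤ_[p], (((2 : ℚ_[p]) ^ (if p = 2 then 1 else 0)) • A) i j =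
      (if i = j then 2 else 1) * (x : ℚ_[p])) ↔
      ∃ x : ℤ_[p], A i j = (if i = j then 1 else 2⁻¹) * (x : ℚ_[p]) by
    simp only [h]; tauto
  intro i j
  by_cases hp : p = 2
  · simp only [hp, if_true, pow_one, Matrix.smul_apply, smul_eq_mul]
    refine exists_congr fun x => ?_
    split_ifs
    · rw [one_mul, mul_right_inj' h2]
    · rw [one_mul, eq_inv_mul_iff_mul_eq₀ h2]
  · obtain ⟨u, hu⟩ := isUnit_two hp
    have hv : ((↑u⁻¹ : ℤ_[p]) : ℚ_[p]) * 2 = 1 := by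
      have := u.inv_mul
      rw [hu] at this
      have := congrArg (fun x : ℤ_[p] => (x : ℚ_[p])) this
      simpa [coe_two] using this
    simp only [hp, if_false, pow_zero, Matrix.smul_apply, one_smul]
    split_ifs
    · constructor
      · rintro ⟨x, hx⟩; exact ⟨2 * x, by rw [hx, PadicInt.coe_mul, coe_two]; ring⟩
      · rintro ⟨x, hx⟩
        refine ⟨↑u⁻¹ * x, ?_⟩
        rw [hx]; push_cast; linear_combination (-(x : ℚ_[p])) * hv
    · constructor
      · rintro ⟨x, hx⟩; exact ⟨2 * x, by rw [hx, PadicInt.coe_mul, coe_two]; field_simp⟩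
      · rintro ⟨x, hx⟩
        refine ⟨↑u⁻¹ * x, ?_⟩
        rw [hx]; push_cast
        field_simp
        linear_combination (-(x : ℚ_[p])) * hv

end Basics

/-! ### Elementary divisors and the double cosets -/

/-- Smith normal form of a nonsingular square matrix over a principal ideal domain. -/
lemma exists_smith {R : Type*} [CommRing R] [IsDomain R] [IsPrincipalIdealRing R]
    {n : Type*} [Fintype n] [DecidableEq n] (W : Matrix n n R) (h : W.det ≠ 0) :
    ∃ (U V : Matrix n n R) (d : n → R), IsUnit U.det ∧ IsUnit V.det ∧
      W = U * Matrix.diagonal d * V := by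
  have hinj : Function.Injective (Matrix.toLin' W) := by
    rw [← LinearMap.ker_eq_bot, LinearMap.ker_eq_bot']
    intro v hv
    exact Matrix.eq_zero_of_mulVec_eq_zero h (by simpa using hv)
  let N := LinearMap.range (Matrix.toLin' W)
  let E : (n → R) ≃ₗ[R] N := LinearEquiv.ofInjective _ hinj
  obtain ⟨b, d, c, hc⟩ := Submodule.exists_smith_normal_form_of_rank_eq (N := N)
    (Pi.basisFun R n) E.finrank_eq.symm
  let c' := c.map E.symm
  let e := Pi.basisFun R n
  have hb : IsUnit (e.toMatrix b).det := by
    have := e.toMatrix_mul_toMatrix_flip b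
    exact IsUnit.of_mul_eq_one (b.toMatrix e).det (by rw [← Matrix.det_mul, this, Matrix.det_one])
  have hcu := e.toMatrix_mul_toMatrix_flip c'
  have hcu' := c'.toMatrix_mul_toMatrix_flip e
  have hc' : IsUnit (c'.toMatrix e).det :=
    IsUnit.of_mul_eq_one (e.toMatrix c').det (by rw [← Matrix.det_mul, hcu', Matrix.det_one])
  refine ⟨e.toMatrix b, c'.toMatrix e, d, hb, hc', ?_⟩
  have key : W * e.toMatrix c' = e.toMatrix b * Matrix.diagonal d := by
    ext i j
    have h1 : W.mulVec (c' j) = d j • b j := by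
      rw [← hc j]
      have : E (c' j) = c j := by simp [c']
      rw [← this]
      rfl
    rw [Matrix.mul_diagonal]
    have h2 := congrFun h1 i
    simp only [Pi.smul_apply, smul_eq_mul] at h2
    rw [mul_comm, Module.Basis.toMatrix_apply, Pi.basisFun_repr, ← h2]
    rfl
  rw [← key, Matrix.mul_assoc, hcu, Matrix.mul_one]

section Dset

variable {n : Type*} [Fintype n] [DecidableEq n]

lemma valuation_isUnit {u : ℤ_[p]} (h : IsUnit u) : u.valuation = 0 := by
  obtain ⟨v, hv⟩ := h.exists_right_inv
  have h1 := PadicInt.valuation_mul (left_ne_zero_of_mul_eq_one hv)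
    (right_ne_zero_of_mul_eq_one hv)
  rw [hv, PadicInt.valuation_one] at h1
  omega

lemma valuation_det_diagonal (s : Finset n) :
    (Matrix.diagonal (fun j => if j ∈ s then (p : ℤ_[p]) else 1)).det.valuation = s.card := by
  rw [Matrix.det_diagonal, Finset.prod_ite_mem, Finset.univ_inter, Finset.prod_const,
    PadicInt.valuation_pow, PadicInt.valuation_p, mul_one]

lemma det_diagonal_ne_zero (s : Finset n) :
    (Matrix.diagonal (fun j => if j ∈ s then (p : ℤ_[p]) else 1)).det ≠ 0 := by
  rw [Matrix.det_diagonal, Finset.prod_ite_mem, Finset.univ_inter, Finset.prod_const]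
  exact pow_ne_zero _ (NeZero.ne _)

lemma valuation_det_of_eq {U D V : Matrix n n ℤ_[p]} (hU : IsUnit U.det) (hV : IsUnit V.det)
    (hD : D.det ≠ 0) : (U * D * V).det.valuation = D.det.valuation := by
  rw [Matrix.det_mul, Matrix.det_mul, PadicInt.valuation_mul (mul_ne_zero hU.ne_zero hD)
    hV.ne_zero, PadicInt.valuation_mul hU.ne_zero hD, valuation_isUnit hU, valuation_isUnit hV]
  omega

/-- `D_{n,i}` consists of the nonsingular matrices that divide `p` and whose determinant has
valuation `i`. -/
lemma mem_Dset_iff (i : ℕ) (W : Matrix n n ℤ_[p]) :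
    W ∈ Dset p i ↔ W.det ≠ 0 ∧ W.det.valuation = i ∧
      ∃ W' : Matrix n n ℤ_[p], W * W' = (p : ℤ_[p]) • 1 := by
  constructor
  · rintro ⟨s, hs, U, V, hU, hV, rfl⟩
    refine ⟨?_, ?_, ?_⟩
    · rw [Matrix.det_mul, Matrix.det_mul]
      exact mul_ne_zero (mul_ne_zero hU.ne_zero (det_diagonal_ne_zero s)) hV.ne_zero
    · rw [valuation_det_of_eq hU hV (det_diagonal_ne_zero s), valuation_det_diagonal, hs]
    · refine ⟨V⁻¹ * Matrix.diagonal (fun j => if j ∈ s then 1 else (p : ℤ_[p])) * U⁻¹, ?_⟩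
      have hd : Matrix.diagonal (fun j => if j ∈ s then (p : ℤ_[p]) else 1) *
          Matrix.diagonal (fun j => if j ∈ s then 1 else (p : ℤ_[p])) = (p : ℤ_[p]) • 1 := by
        rw [Matrix.diagonal_mul_diagonal, Matrix.smul_one_eq_diagonal]
        congr 1; ext j; split_ifs <;> simp
      simp only [Matrix.mul_assoc]
      rw [Matrix.mul_nonsing_inv_cancel_left _ _ hV, ← Matrix.mul_assoc (Matrix.diagonal _), hd]
      simp [Matrix.mul_nonsing_inv _ hU]
  · rintro ⟨hdet, hval, W', hW'⟩
    obtain ⟨U, V, d, hU, hV, rfl⟩ := exists_smith W hdet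
    have hdvd : ∀ j, d j ∣ (p : ℤ_[p]) := by
      have h1 : Matrix.diagonal d * (V * W' * U) = (p : ℤ_[p]) • 1 := by
        calc Matrix.diagonal d * (V * W' * U)
            = U⁻¹ * (U * Matrix.diagonal d * V * W') * U := by
              simp only [Matrix.mul_assoc]
              rw [Matrix.nonsing_inv_mul_cancel_left _ _ hU]
          _ = _ := by rw [hW']; simp [Matrix.nonsing_inv_mul _ hU]
      intro j
      have h2 := congrFun (congrFun h1 j) j
      rw [Matrix.diagonal_mul, Matrix.smul_apply, Matrix.one_apply_eq, smul_eq_mul, mul_one] at h2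
      exact ⟨_, h2.symm⟩
    have hun : ∀ j, ∃ u : ℤ_[p], IsUnit u ∧
        d j = u * if j ∈ Finset.univ.filter (fun j => ¬ IsUnit (d j)) then (p : ℤ_[p]) else 1 := by
      intro j
      by_cases hj : IsUnit (d j)
      · exact ⟨d j, hj, by simp [hj]⟩
      · have := (PadicInt.irreducible_p (p := p)).dvd_iff.1 (hdvd j)
        obtain ⟨u, hu⟩ := (this.resolve_left hj)
        exact ⟨u, u.isUnit, by
          rw [if_pos (by simpa using hj), ← hu, mul_comm]⟩
    choose u hu hd using hun
    set s := Finset.univ.filter (fun j => ¬ IsUnit (d j))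
    have hfac : U * Matrix.diagonal d * V =
        (U * Matrix.diagonal u) * Matrix.diagonal (fun j => if j ∈ s then (p : ℤ_[p]) else 1) *
          V := by
      rw [Matrix.mul_assoc U (Matrix.diagonal u), Matrix.diagonal_mul_diagonal]
      congr 3; ext j; exact hd j
    have hU' : IsUnit (U * Matrix.diagonal u).det := by
      rw [Matrix.det_mul, Matrix.det_diagonal]
      exact hU.mul (IsUnit.prod_univ_iff.2 hu)
    refine ⟨s, ?_, U * Matrix.diagonal u, V, hU', hV, hfac⟩
    rw [← hval, hfac, valuation_det_of_eq hU' hV (det_diagonal_ne_zero s), valuation_det_diagonal]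

end Dset

/-! ### The lifted form `A^{(1)}` under block triangular substitutions -/

section Lift

variable {n : Type*} [Fintype n] [DecidableEq n]

/-- The block upper triangular matrix `[[1, s], [0, W]]`. -/
def blk (s : n → ℤ_[p]) (W : Matrix n n ℤ_[p]) : Matrix (Fin 1 ⊕ n) (Fin 1 ⊕ n) ℤ_[p] :=
  Matrix.fromBlocks 1 (Matrix.of fun _ j => s j) 0 W

/-- The unipotent matrix `[[1, r/2], [0, 1]]` over `ℚ_p`. -/
def halfShift (r : n → ℤ_[p]) : Matrix (Fin 1 ⊕ n) (Fin 1 ⊕ n) ℚ_[p] :=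
  Matrix.fromBlocks 1 (Matrix.of fun _ j => (r j : ℚ_[p]) / 2) 0 1

lemma det_blk (s : n → ℤ_[p]) (W : Matrix n n ℤ_[p]) : (blk s W).det = W.det := by
  rw [blk, Matrix.det_fromBlocks_zero₂₁, Matrix.det_one, one_mul]

lemma blk_mul (s t : n → ℤ_[p]) (U W : Matrix n n ℤ_[p]) :
    blk s U * blk t W = blk (t + s ᵥ* W) (U * W) := by
  rw [blk, blk, blk, Matrix.fromBlocks_multiply]
  simp only [Matrix.one_mul, Matrix.mul_zero, Matrix.zero_mul, add_zero, zero_add]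
  rfl

/-- Completing the square: `A^{(1)}` is the diagonal form `1 ⊥ A/4` in shifted coordinates. -/
lemma Aone_eq (A : Matrix n n ℚ_[p]) (r : n → ℤ_[p]) :
    Aone p A r =
      (halfShift r)ᵀ * Matrix.fromBlocks 1 0 0 ((4 : ℚ_[p])⁻¹ • A) * halfShift r := by
  rw [halfShift, Matrix.fromBlocks_transpose, Matrix.fromBlocks_multiply,
    Matrix.fromBlocks_multiply, Aone]
  simp only [Matrix.transpose_one, Matrix.transpose_zero, Matrix.one_mul, Matrix.mul_one,
    Matrix.mul_zero, Matrix.zero_mul, add_zero, zero_add]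
  congr 1
  ext i j
  simp [outer, Matrix.mul_apply]
  ring

lemma det_Aone_ne_zero {A : Matrix n n ℚ_[p]} (h : A.det ≠ 0) (r : n → ℤ_[p]) :
    (Aone p A r).det ≠ 0 := by
  have h4 : (4 : ℚ_[p]) ≠ 0 := four_ne_zero_padic
  rw [Aone_eq, Matrix.det_mul, Matrix.det_mul, Matrix.det_transpose, halfShift,
    Matrix.det_fromBlocks_zero₂₁, Matrix.det_fromBlocks_zero₂₁, Matrix.det_smul]
  simp [h]

lemma det_of_det_Aone_ne_zero {A : Matrix n n ℚ_[p]} {r : n → ℤ_[p]}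
    (h : (Aone p A r).det ≠ 0) : A.det ≠ 0 := by
  intro h0
  apply h
  rw [Aone_eq, Matrix.det_mul, Matrix.det_mul,
    Matrix.det_fromBlocks_zero₂₁, Matrix.det_smul, h0]
  simp

lemma halfShift_mul_blk (s r : n → ℤ_[p]) (W : Matrix n n ℤ_[p]) :
    halfShift r * q p (blk s W) =
      Matrix.fromBlocks 1 0 0 (q p W) * halfShift ((2 : ℤ_[p]) • s + r ᵥ* W) := by
  have : q p (blk s W) = Matrix.fromBlocks 1 (Matrix.of fun _ j => (s j : ℚ_[p])) 0 (q p W) := by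
    rw [q, blk, Matrix.fromBlocks_map]
    congr 1
    exact Matrix.map_one _ (by simp) (by simp)
  rw [this, halfShift, halfShift, Matrix.fromBlocks_multiply, Matrix.fromBlocks_multiply]
  simp only [Matrix.one_mul, Matrix.mul_one,
    Matrix.mul_zero, Matrix.zero_mul, add_zero, zero_add]
  congr 1
  ext i j
  have h2 : (2 : ℚ_[p]) ≠ 0 := two_ne_zero
  simp only [Matrix.add_apply, Matrix.of_apply, Matrix.mul_apply, Pi.add_apply, Pi.smul_apply,
    smul_eq_mul, PadicInt.coe_add, PadicInt.coe_mul, coe_two, Matrix.vecMul, dotProduct,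
    PadicInt.coe_sum, q_apply]
  rw [add_div, mul_div_cancel_left₀ _ h2, Finset.sum_div]
  congr 1
  exact Finset.sum_congr rfl fun x _ => by ring

/-- The key identity: the substitution `[[1, s], [0, W]]` takes the lift of `(A, r)` to the lift
of `(A[W], 2s + rW)`. -/
lemma Aone_conj (A : Matrix n n ℚ_[p]) (s r : n → ℤ_[p]) (W : Matrix n n ℤ_[p]) :
    (q p (blk s W))ᵀ * Aone p A r * q p (blk s W) =
      Aone p ((q p W)ᵀ * A * q p W) ((2 : ℤ_[p]) • s + r ᵥ* W) := by
  have h := halfShift_mul_blk s r W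
  have hT := congrArg Matrix.transpose h
  rw [Matrix.transpose_mul, Matrix.transpose_mul] at hT
  rw [Aone_eq, Aone_eq]
  calc _ = (q p (blk s W))ᵀ * (halfShift r)ᵀ * Matrix.fromBlocks 1 0 0 ((4 : ℚ_[p])⁻¹ • A) *
        (halfShift r * q p (blk s W)) := by simp only [Matrix.mul_assoc]
    _ = (halfShift ((2 : ℤ_[p]) • s + r ᵥ* W))ᵀ * ((Matrix.fromBlocks 1 0 0 (q p W))ᵀ *
        Matrix.fromBlocks 1 0 0 ((4 : ℚ_[p])⁻¹ • A) * Matrix.fromBlocks 1 0 0 (q p W)) *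
        halfShift ((2 : ℤ_[p]) • s + r ᵥ* W) := by
          rw [h, hT]; simp only [Matrix.mul_assoc]
    _ = _ := by
      congr 2
      rw [Matrix.fromBlocks_transpose, Matrix.fromBlocks_multiply, Matrix.fromBlocks_multiply]
      simp

lemma isHalfIntegral_Aone_iff (A : Matrix n n ℚ_[p]) (r : n → ℤ_[p]) :
    IsHalfIntegral p (Aone p A r) ↔ InFourL p (A + outer p r) := by
  constructor
  · rintro ⟨hs, h⟩
    refine ⟨?_, fun i j => ?_⟩
    · ext i j
      exact congrFun (congrFun hs (Sum.inr i)) (Sum.inr j)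
    · simpa [Aone, mul_add] using h (Sum.inr i) (Sum.inr j)
  · rintro ⟨hs, h⟩
    refine ⟨?_, ?_⟩
    · rw [Matrix.IsSymm, Aone, Matrix.fromBlocks_transpose, hs.eq, Matrix.transpose_one]
      rfl
    · rintro (i | i) (j | j)
      · exact ⟨1, by simp [Aone, Subsingleton.elim i j]⟩
      · exact ⟨r j, by simp [Aone]; ring⟩
      · exact ⟨r i, by simp [Aone]; ring⟩
      · simpa [Aone, mul_add] using h i j

lemma outer_conj (r : n → ℤ_[p]) (W : Matrix n n ℤ_[p]) :
    (q p W)ᵀ * outer p r * q p W = outer p (r ᵥ* W) := by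
  have : ∀ t : n → ℤ_[p], outer p t =
      (q p (Matrix.of fun (_ : Fin 1) j => t j))ᵀ * q p (Matrix.of fun (_ : Fin 1) j => t j) := by
    intro t
    ext i j
    simp [outer, Matrix.mul_apply, q_apply]
  have hv : (Matrix.of fun (_ : Fin 1) j => (r ᵥ* W) j) =
      (Matrix.of fun (_ : Fin 1) j => r j) * W := rfl
  rw [this, this, hv, q_mul, Matrix.transpose_mul]
  simp only [Matrix.mul_assoc]

lemma InFourL.conj {A : Matrix n n ℚ_[p]} {r : n → ℤ_[p]} (h : InFourL p (A + outer p r))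
    (W : Matrix n n ℤ_[p]) :
    InFourL p ((q p W)ᵀ * A * q p W + outer p (r ᵥ* W)) := by
  have := IsHalfIntegral.conj h W
  rw [← outer_conj]
  simpa only [InFourL, Matrix.mul_add, Matrix.add_mul, Matrix.mul_smul, Matrix.smul_mul] using this

lemma two_dvd_sub {a b : ℤ_[p]} (h : 2 ∣ a * a - b * b) : 2 ∣ a - b := by
  by_cases hp : p = 2
  · subst hp
    have hprime : Prime (2 : ℤ_[2]) := by simpa using PadicInt.prime_p (p := 2)
    have h' : (2 : ℤ_[2]) ∣ (a - b) * (a + b) := by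
      convert h using 1; ring
    rcases hprime.dvd_or_dvd h' with h1 | h1
    · exact h1
    · have : a - b = (a + b) - 2 * b := by ring
      rw [this]
      exact dvd_sub h1 (dvd_mul_right _ _)
  · exact (isUnit_two hp).dvd

/-- The vector `r` with `A + rᵀr ∈ 4L` is determined by `A` modulo `2`: comparing diagonals gives
`r_i² ≡ t_i² mod 4`. -/
lemma exists_eq_two_smul_add {A : Matrix n n ℚ_[p]} {r t : n → ℤ_[p]}
    (hr : InFourL p (A + outer p r)) (ht : InFourL p (A + outer p t)) :
    ∃ s : n → ℤ_[p], r = (2 : ℤ_[p]) • s + t := by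
  have : ∀ i, ∃ x, r i - t i = 2 * x := by
    intro i
    obtain ⟨x, hx⟩ := hr.2 i i
    obtain ⟨y, hy⟩ := ht.2 i i
    refine two_dvd_sub ⟨2 * (x - y), ?_⟩
    have h4 : (4 : ℚ_[p]) ≠ 0 := four_ne_zero_padic
    simp only [Matrix.smul_apply, Matrix.add_apply, outer, Matrix.of_apply, smul_eq_mul, if_true,
      one_mul, inv_mul_eq_iff_eq_mul₀ h4] at hx hy
    apply Subtype.ext
    change ((r i * r i - t i * t i : ℤ_[p]) : ℚ_[p]) = ((2 * (2 * (x - y)) : ℤ_[p]) : ℚ_[p])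
    rw [PadicInt.coe_sub, PadicInt.coe_mul, PadicInt.coe_mul, PadicInt.coe_mul, PadicInt.coe_mul,
      PadicInt.coe_sub, coe_two]
    linear_combination hx - hy
  choose s hs using this
  refine ⟨s, ?_⟩
  ext1 i
  simp [← hs i]

lemma inL1_of_inFourL {A : Matrix n n ℚ_[p]} {r : n → ℤ_[p]} (h : InFourL p (A + outer p r))
    (hA : A.det ≠ 0) : InL1 p A := by
  refine ⟨⟨?_, r, h⟩, hA⟩
  obtain ⟨X, hX⟩ := (isHalfIntegral_iff _).1 h
  refine (isHalfIntegral_iff _).2 ⟨Matrix.of fun i j => 2 * 2 * X i j - r i * r j, ?_⟩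
  ext i j
  have h4 : (4 : ℚ_[p]) ≠ 0 := four_ne_zero_padic
  have h2 : (2 : ℚ_[p]) ≠ 0 := two_ne_zero
  have := congrFun (congrFun hX i) j
  simp only [Matrix.smul_apply, Matrix.add_apply, Matrix.transpose_apply, q_apply, outer,
    Matrix.of_apply, smul_eq_mul, inv_mul_eq_iff_eq_mul₀ h4, PadicInt.coe_sub, PadicInt.coe_mul,
    coe_two] at this ⊢
  linear_combination this + (r i : ℚ_[p]) * (r j : ℚ_[p]) * (mul_inv_cancel₀ h2)

/-- Every `W ∈ Ω̃^{(1)}(B)` extends to a block matrix carrying the lift of `B[W⁻¹]` to that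
of `B`. -/
lemma exists_lift {B : Matrix n n ℚ_[p]} {r : n → ℤ_[p]} (hr : InFourL p (B + outer p r))
    {W : Matrix n n ℤ_[p]} (hW : W ∈ OmT1 p B) :
    ∃ s t : n → ℤ_[p], InFourL p (conjInv p B W + outer p t) ∧
      r = (2 : ℤ_[p]) • s + t ᵥ* W := by
  obtain ⟨hdet, ⟨-, t, ht⟩, -⟩ := hW
  have h := ht.conj W
  rw [← (conjInv_eq_iff hdet).1 rfl] at h
  obtain ⟨s, hs⟩ := exists_eq_two_smul_add hr h
  exact ⟨s, t, ht, hs⟩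

lemma conjInv_Aone {B : Matrix n n ℚ_[p]} {r s t : n → ℤ_[p]} {W : Matrix n n ℤ_[p]}
    (hdet : W.det ≠ 0) (h : r = (2 : ℤ_[p]) • s + t ᵥ* W) :
    conjInv p (Aone p B r) (blk s W) = Aone p (conjInv p B W) t := by
  rw [conjInv_eq_iff (by rwa [det_blk]), Aone_conj, ← (conjInv_eq_iff hdet).1 rfl, ← h]

lemma sameLeft_of_blk {s t : n → ℤ_[p]} {W W' : Matrix n n ℤ_[p]}
    (h : SameLeft p (blk s W) (blk t W')) : SameLeft p W W' := by
  obtain ⟨U, hU, hUW⟩ := h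
  rw [← Matrix.fromBlocks_toBlocks U] at hU hUW
  rw [blk, blk, Matrix.fromBlocks_multiply, Matrix.fromBlocks_inj] at hUW
  obtain ⟨ha, -, hc, hd⟩ := hUW
  simp only [Matrix.mul_one, Matrix.mul_zero, add_zero] at ha hc
  rw [← hc, Matrix.zero_mul, zero_add] at hd
  rw [← hc, ← ha, Matrix.det_fromBlocks_zero₂₁, Matrix.det_one, one_mul] at hU
  exact ⟨_, hU, hd⟩

lemma two_smul_cancel {s t : n → ℤ_[p]} (h : (2 : ℤ_[p]) • s = (2 : ℤ_[p]) • t) : s = t :=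
  smul_right_injective _ (two_ne_zero (α := ℤ_[p])) h

/-- Two lifts of left-equivalent matrices are left-equivalent, whatever the choices of the
auxiliary vectors. -/
lemma sameLeft_blk {B : Matrix n n ℚ_[p]} {r s₁ s₂ t₁ t₂ : n → ℤ_[p]}
    {W₁ W₂ : Matrix n n ℤ_[p]} (h₁ : W₁.det ≠ 0) (h₂ : W₂.det ≠ 0)
    (ht₁ : InFourL p (conjInv p B W₁ + outer p t₁)) (hr₁ : r = (2 : ℤ_[p]) • s₁ + t₁ ᵥ* W₁)
    (ht₂ : InFourL p (conjInv p B W₂ + outer p t₂)) (hr₂ : r = (2 : ℤ_[p]) • s₂ + t₂ ᵥ* W₂)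
    (h : SameLeft p W₁ W₂) : SameLeft p (blk s₁ W₁) (blk s₂ W₂) := by
  obtain ⟨U, hU, rfl⟩ := h
  have hB : conjInv p B W₁ = (q p U)ᵀ * conjInv p B (U * W₁) * q p U := by
    rw [conjInv_eq_iff h₁]
    have := (conjInv_eq_iff (A := B) h₂).1 rfl
    rw [q_mul, Matrix.transpose_mul] at this
    simpa only [Matrix.mul_assoc] using this
  have ht := ht₂.conj U
  rw [← hB] at ht
  obtain ⟨c, hc⟩ := exists_eq_two_smul_add ht₁ ht
  refine ⟨blk c U, by rwa [det_blk], ?_⟩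
  rw [blk_mul]
  congr 1
  apply two_smul_cancel
  rw [hc, Matrix.add_vecMul, Matrix.vecMul_vecMul, Matrix.smul_vecMul] at hr₁
  rw [hr₁] at hr₂
  rw [smul_add]
  exact add_right_cancel (hr₂.symm.trans (add_assoc _ _ _).symm)

/-! ### Primitive first columns -/

/-- A vector with a unit coordinate is the first column of an invertible matrix. -/
lemma exists_first_col {l : Type*} [Fintype l] [DecidableEq l] (v : l → ℤ_[p]) (o k : l)
    (hk : IsUnit (v k)) : ∃ M : Matrix l l ℤ_[p], IsUnit M.det ∧ ∀ i, M i o = v i := by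
  refine ⟨((1 : Matrix l l ℤ_[p]).updateCol k v).submatrix id (Equiv.swap o k), ?_, fun i => ?_⟩
  · rw [Matrix.det_permute', ← Matrix.cramer_apply, Matrix.cramer_one]
    refine IsUnit.mul ?_ (by simpa using hk)
    exact (Units.isUnit _).map (Int.castRingHom ℤ_[p])
  · simp

/-- If a half-integral form pulls back under an integral matrix `V` to a form with value `1` at
the `o`-th basis vector, then the `o`-th column of `V` is primitive. -/
lemma exists_isUnit_col {l : Type*} [Fintype l] [DecidableEq l] {C : Matrix l l ℚ_[p]}
    (hC : IsHalfIntegral p C) (V : Matrix l l ℤ_[p]) (o : l)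
    (h : ((q p V)ᵀ * C * q p V) o o = 1) : ∃ k, IsUnit (V k o) := by
  by_contra! hne
  have hdvd : ∀ k, ∃ x, V k o = p * x := by
    intro k
    have : V k o ∈ IsLocalRing.maximalIdeal ℤ_[p] := hne k
    rw [PadicInt.maximalIdeal_eq_span_p, Ideal.mem_span_singleton] at this
    exact this
  choose x hx using hdvd
  obtain ⟨X, rfl⟩ := (isHalfIntegral_iff C).1 hC
  have h1 : (1 : ℤ_[p]) = (Vᵀ * X * V) o o := by
    apply Subtype.ext
    change ((1 : ℤ_[p]) : ℚ_[p]) = q p (Vᵀ * X * V) o o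
    have hsymm : (q p V)ᵀ * (q p X)ᵀ * q p V = (q p (Vᵀ * X * V))ᵀ := by
      simp only [q_mul, q_transpose, Matrix.transpose_mul, Matrix.transpose_transpose,
        Matrix.mul_assoc]
    rw [Matrix.mul_smul, Matrix.smul_mul, Matrix.mul_add, Matrix.add_mul, hsymm, ← q_transpose,
      ← q_mul, ← q_mul, Matrix.smul_apply, Matrix.add_apply, Matrix.transpose_apply,
      smul_eq_mul] at h
    rw [PadicInt.coe_one, ← h]
    ring
  have h2 : (p : ℤ_[p]) ∣ (Vᵀ * X * V) o o := by
    rw [Matrix.mul_apply]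
    refine Finset.dvd_sum fun k _ => ?_
    rw [hx k]
    exact Dvd.dvd.mul_left (dvd_mul_right _ _) _
  rw [← h1] at h2
  exact PadicInt.prime_p.not_isUnit (isUnit_of_dvd_one h2)

lemma IsHalfIntegral.exists_blocks {C : Matrix (Fin 1 ⊕ n) (Fin 1 ⊕ n) ℚ_[p]}
    (hC : IsHalfIntegral p C) (h1 : C (Sum.inl 0) (Sum.inl 0) = 1) :
    ∃ (A : Matrix n n ℚ_[p]) (t : n → ℤ_[p]), C = Aone p A t := by
  choose x hx using hC.2
  have h4 : (4 : ℚ_[p]) ≠ 0 := four_ne_zero_padic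
  refine ⟨(4 : ℚ_[p]) • C.toBlocks₂₂ - outer p (fun j => x (Sum.inl 0) (Sum.inr j)),
    fun j => x (Sum.inl 0) (Sum.inr j), ?_⟩
  rw [Aone, sub_add_cancel, smul_smul, inv_mul_cancel₀ h4, one_smul]
  ext (i | i) (j | j)
  · fin_cases i; fin_cases j
    simpa using h1
  · fin_cases i
    have := hx (Sum.inl 0) (Sum.inr j)
    simp at this
    simp [this]; ring
  · fin_cases j
    have := hx (Sum.inl 0) (Sum.inr i)
    simp at this
    have hs := hC.1.apply (Sum.inr i) (Sum.inl 0)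
    simp [← hs, this]; ring
  · rfl

lemma exists_eq_blk {V : Matrix (Fin 1 ⊕ n) (Fin 1 ⊕ n) ℤ_[p]}
    (h : ∀ i, V i (Sum.inl 0) = (1 : Matrix (Fin 1 ⊕ n) (Fin 1 ⊕ n) ℤ_[p]) i (Sum.inl 0)) :
    ∃ (s : n → ℤ_[p]) (W : Matrix n n ℤ_[p]), V = blk s W := by
  refine ⟨fun j => V (Sum.inl 0) (Sum.inr j), V.toBlocks₂₂, ?_⟩
  ext (i | i) (j | j)
  · fin_cases i; fin_cases j
    simpa [blk] using h (Sum.inl 0)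
  · fin_cases i; rfl
  · fin_cases j
    simpa [blk] using h (Sum.inr i)
  · rfl

/-- Every matrix in `Ω̃^{(0)}` of the lift is left-equivalent to a block matrix lifting an element
of `Ω̃^{(1)}(B)`. -/
lemma exists_sameLeft_blk {B : Matrix n n ℚ_[p]} {r : n → ℤ_[p]}
    {V : Matrix (Fin 1 ⊕ n) (Fin 1 ⊕ n) ℤ_[p]} (hV : V.det ≠ 0)
    (hC : IsHalfIntegral p (conjInv p (Aone p B r) V))
    (hCdet : (conjInv p (Aone p B r) V).det ≠ 0) :
    ∃ (s t : n → ℤ_[p]) (W : Matrix n n ℤ_[p]), W ∈ OmT1 p B ∧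
      InFourL p (conjInv p B W + outer p t) ∧ r = (2 : ℤ_[p]) • s + t ᵥ* W ∧
      SameLeft p (blk s W) V := by
  set C := conjInv p (Aone p B r) V with hCdef
  have hpull : Aone p B r = (q p V)ᵀ * C * q p V := (conjInv_eq_iff hV).1 rfl
  obtain ⟨k, hk⟩ := exists_isUnit_col hC V (Sum.inl 0) (by rw [← hpull]; simp [Aone])
  obtain ⟨M, hM, hMcol⟩ := exists_first_col (fun i => V i (Sum.inl 0)) (Sum.inl 0) k hk
  have hVM : V = M * (M⁻¹ * V) := (Matrix.mul_nonsing_inv_cancel_left _ _ hM).symm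
  obtain ⟨s, W, hsW⟩ := exists_eq_blk (V := M⁻¹ * V) (by
    intro i
    rw [← Matrix.nonsing_inv_mul _ hM, Matrix.mul_apply, Matrix.mul_apply]
    exact Finset.sum_congr rfl fun j _ => by rw [hMcol])
  rw [hsW] at hVM
  have hWdet : W.det ≠ 0 := by
    rw [hVM, Matrix.det_mul, det_blk] at hV
    exact right_ne_zero_of_mul hV
  have hC' := hC.conj M
  have hpull' : Aone p B r = (q p (blk s W))ᵀ * ((q p M)ᵀ * C * q p M) * q p (blk s W) := by
    rw [hpull]
    conv_lhs => rw [hVM]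
    rw [q_mul, Matrix.transpose_mul]
    simp only [Matrix.mul_assoc]
  -- the first basis vector is fixed by the block matrix, so the value there is still `1`
  have h11 : ((q p M)ᵀ * C * q p M) (Sum.inl 0) (Sum.inl 0) = 1 := by
    have h := congrFun (congrFun hpull' (Sum.inl 0)) (Sum.inl 0)
    rw [Matrix.mul_apply] at h
    simpa [Matrix.mul_apply (N := ((q p M)ᵀ * C * q p M)), Aone, blk, q_apply] using h.symm
  obtain ⟨A, t, hAt⟩ := hC'.exists_blocks h11
  rw [hAt, Aone_conj] at hpull'
  have hr : r = (2 : ℤ_[p]) • s + t ᵥ* W := by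
    ext1 j
    have h := congrFun (congrFun hpull' (Sum.inl 0)) (Sum.inr j)
    simp only [Aone, Matrix.fromBlocks_apply₁₂, Matrix.of_apply] at h
    have h2 : (2 : ℚ_[p]) ≠ 0 := two_ne_zero
    exact Subtype.ext ((div_left_inj' h2).1 h)
  have hBA : B = (q p W)ᵀ * A * q p W := by
    rw [← hr] at hpull'
    have h4 : (4 : ℚ_[p])⁻¹ ≠ 0 := inv_ne_zero four_ne_zero_padic
    have h := (Matrix.fromBlocks_inj.1 hpull').2.2.2
    exact add_right_cancel (smul_right_injective _ h4 h)
  have hconj : conjInv p B W = A := (conjInv_eq_iff hWdet).2 hBA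
  rw [hAt, isHalfIntegral_Aone_iff] at hC'
  have hAdet : A.det ≠ 0 := by
    apply det_of_det_Aone_ne_zero (r := t)
    rw [← hAt, Matrix.det_mul, Matrix.det_mul, Matrix.det_transpose]
    have := (isUnit_det_q hM.ne_zero).ne_zero
    exact mul_ne_zero (mul_ne_zero this hCdet) this
  refine ⟨s, t, W, ⟨hWdet, ?_⟩, ?_, hr, M, hM, hVM⟩
  · rw [hconj]
    exact inL1_of_inFourL hC' hAdet
  · rwa [hconj]

lemma blk_mem_Dset_iff (i : ℕ) (s : n → ℤ_[p]) (W : Matrix n n ℤ_[p]) :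
    W ∈ Dset p i ↔ blk s W ∈ Dset p i := by
  rw [mem_Dset_iff, mem_Dset_iff, det_blk]
  refine and_congr_right fun _ => and_congr_right fun _ => ?_
  constructor
  · rintro ⟨W', hW'⟩
    refine ⟨Matrix.fromBlocks ((p : ℤ_[p]) • 1) (-((Matrix.of fun _ j => s j) * W')) 0 W', ?_⟩
    rw [blk, Matrix.fromBlocks_multiply, hW', ← Matrix.fromBlocks_one, Matrix.fromBlocks_smul]
    simp
  · rintro ⟨V, hV⟩
    refine ⟨V.toBlocks₂₂, ?_⟩
    rw [← Matrix.fromBlocks_toBlocks V, blk, Matrix.fromBlocks_multiply, ← Matrix.fromBlocks_one,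
      Matrix.fromBlocks_smul] at hV
    simpa using (Matrix.fromBlocks_inj.1 hV).2.2.2

end Lift

end KM

/-- there is a bijection `ψ : GL\Ω̃^{(1)}(B) ≃ GL\Ω̃^{(0)}(2^{δ_{2,p}}B^{(1)})`
preserving `ν_p(det ·)` and compatible with `D_{·,i}` for `0 ≤ i ≤ m-1`. -/
theorem statement10 (p : ℕ) [Fact p.Prime] (m : ℕ) (hme : Even m) (hm0 : 0 < m)
    (B : Matrix (Fin (m - 1)) (Fin (m - 1)) ℚ_[p]) (hB : KM.InL1 p B)
    (r : Fin (m - 1) → ℤ_[p]) (hr : KM.InFourL p (B + KM.outer p r)) :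
    ∃ φ : Matrix (Fin (m - 1)) (Fin (m - 1)) ℤ_[p] →
        Matrix (Fin 1 ⊕ Fin (m - 1)) (Fin 1 ⊕ Fin (m - 1)) ℤ_[p],
      KM.InducesLeftBij p φ (KM.OmT1 p B)
        (KM.OmT0 p (((2 : ℚ_[p]) ^ (if p = 2 then 1 else 0)) • KM.Aone p B r)) ∧
      (∀ W ∈ KM.OmT1 p B, ((φ W).det).valuation = (W.det).valuation) ∧
      (∀ i ≤ m - 1, ∀ W ∈ KM.OmT1 p B, (W ∈ KM.Dset p i ↔ φ W ∈ KM.Dset p i)) := by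
  -- off `Ω̃^{(1)}(B)` the value of `φ` is irrelevant
  let φ : Matrix (Fin (m - 1)) (Fin (m - 1)) ℤ_[p] →
      Matrix (Fin 1 ⊕ Fin (m - 1)) (Fin 1 ⊕ Fin (m - 1)) ℤ_[p] := fun W =>
    if h : W ∈ KM.OmT1 p B then KM.blk (KM.exists_lift hr h).choose W else 0
  have hφ : ∀ W ∈ KM.OmT1 p B, ∃ s t : Fin (m - 1) → ℤ_[p], φ W = KM.blk s W ∧
      KM.InFourL p (KM.conjInv p B W + KM.outer p t) ∧ r = (2 : ℤ_[p]) • s + t ᵥ* W := by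
    intro W hW
    obtain ⟨t, ht⟩ := (KM.exists_lift hr hW).choose_spec
    exact ⟨_, t, dif_pos hW, ht⟩
  refine ⟨φ, ⟨?_, ?_, ?_⟩, ?_, ?_⟩
  · intro W hW
    obtain ⟨s, t, hs, ht, hst⟩ := hφ W hW
    rw [hs]
    refine ⟨by rw [KM.det_blk]; exact hW.1, ?_⟩
    rw [KM.conjInv_smul, KM.conjInv_Aone hW.1 hst, KM.inL0_iff, KM.isHalfIntegral_Aone_iff]
    exact ⟨ht, KM.det_Aone_ne_zero hW.2.2 t⟩
  · intro W₁ hW₁ W₂ hW₂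
    obtain ⟨s₁, t₁, hs₁, ht₁, hr₁⟩ := hφ W₁ hW₁
    obtain ⟨s₂, t₂, hs₂, ht₂, hr₂⟩ := hφ W₂ hW₂
    rw [hs₁, hs₂]
    exact ⟨KM.sameLeft_blk hW₁.1 hW₂.1 ht₁ hr₁ ht₂ hr₂, KM.sameLeft_of_blk⟩
  · rintro V ⟨hV, hL⟩
    rw [KM.conjInv_smul, KM.inL0_iff] at hL
    obtain ⟨s, t, W, hW, ht, hst, U, hU, hUV⟩ := KM.exists_sameLeft_blk hV hL.1 hL.2
    obtain ⟨s', t', hs', ht', hst'⟩ := hφ W hW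
    obtain ⟨U', hU', hUV'⟩ := KM.sameLeft_blk hW.1 hW.1 ht' hst' ht hst
      ⟨1, by simp, by simp⟩
    refine ⟨W, hW, U * U', ?_, ?_⟩
    · rw [Matrix.det_mul]
      exact hU.mul hU'
    · rw [hs', Matrix.mul_assoc, ← hUV', hUV]
  · intro W hW
    obtain ⟨s, t, hs, -⟩ := hφ W hW
    rw [hs, KM.det_blk]
  · intro i _ W hW
    obtain ⟨s, t, hs, -⟩ := hφ W hW
    rw [hs]
    exact KM.blk_mem_Dset_iff i s W
end
end
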